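/- arXiv:1904.08578 — 3 statements merged into one kernel-verified Lean document; each statement's English description precedes it below -/
import Mathlib

section
/- Let V be a nontrivial simple cuspidal module over the N=2 Ramond algebra 𝔤 of length 2, i.e., dim(V_λ ∩ V_τ) ≤ 2 for all λ ∈ ℂ and τ ∈ {0,1}, with equality attained for some λ and τ. Then there exist a, b, c ∈ ℂ with 2b + c ≠ 2 and 2b − c ≠ 2 such that V is isomorphic, either as a graded 𝔤-module or after interchanging the two parities, to R_{a,b,c}. -/
open Submodule

/-- A module over the `N = 2` Ramond algebra `𝔤`: a `ℤ/2`-graded complex vector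
space `V = even ⊕ odd` with parity-preserving operators `L m`, `H m`,
parity-reversing operators `Gp m` (`G_m^+`), `Gm m` (`G_m^-`), and a scalar `c₀`
(the action of the central element `C`), subject to the defining relations. -/
structure RamondRep (V : Type) [AddCommGroup V] [Module ℂ V] : Type where
  L : ℤ → V →ₗ[ℂ] V
  H : ℤ → V →ₗ[ℂ] V
  Gp : ℤ → V →ₗ[ℂ] V
  Gm : ℤ → V →ₗ[ℂ] V
  c₀ : ℂ
  even : Submodule ℂ V
  odd : Submodule ℂ V
  grading : IsCompl even odd
  L_even : ∀ (m : ℤ), ∀ v ∈ even, L m v ∈ even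
  L_odd : ∀ (m : ℤ), ∀ v ∈ odd, L m v ∈ odd
  H_even : ∀ (m : ℤ), ∀ v ∈ even, H m v ∈ even
  H_odd : ∀ (m : ℤ), ∀ v ∈ odd, H m v ∈ odd
  Gp_even : ∀ (m : ℤ), ∀ v ∈ even, Gp m v ∈ odd
  Gp_odd : ∀ (m : ℤ), ∀ v ∈ odd, Gp m v ∈ even
  Gm_even : ∀ (m : ℤ), ∀ v ∈ even, Gm m v ∈ odd
  Gm_odd : ∀ (m : ℤ), ∀ v ∈ odd, Gm m v ∈ even
  rel_LL : ∀ (m n : ℤ) (v : V),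
    L m (L n v) - L n (L m v) =
      ((n : ℂ) - (m : ℂ)) • L (m + n) v +
        ((1 / 12 : ℂ) * ((n : ℂ) ^ 3 - (n : ℂ)) *
          (if m + n = 0 then (1 : ℂ) else 0) * c₀) • v
  rel_HH : ∀ (m n : ℤ) (v : V),
    H m (H n v) - H n (H m v) =
      ((1 / 3 : ℂ) * (m : ℂ) * (if m + n = 0 then (1 : ℂ) else 0) * c₀) • v
  rel_LH : ∀ (m n : ℤ) (v : V),
    L m (H n v) - H n (L m v) = (n : ℂ) • H (m + n) v
  rel_LGp : ∀ (m p : ℤ) (v : V),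
    L m (Gp p v) - Gp p (L m v) = ((p : ℂ) - (m : ℂ) / 2) • Gp (p + m) v
  rel_LGm : ∀ (m p : ℤ) (v : V),
    L m (Gm p v) - Gm p (L m v) = ((p : ℂ) - (m : ℂ) / 2) • Gm (p + m) v
  rel_HGp : ∀ (m p : ℤ) (v : V),
    H m (Gp p v) - Gp p (H m v) = Gp (m + p) v
  rel_HGm : ∀ (m p : ℤ) (v : V),
    H m (Gm p v) - Gm p (H m v) = -(Gm (m + p) v)
  rel_GpGm : ∀ (p q : ℤ) (v : V),
    Gp p (Gm q v) + Gm q (Gp p v) =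
      (-2 : ℂ) • L (p + q) v + ((p : ℂ) - (q : ℂ)) • H (p + q) v +
        ((1 / 3 : ℂ) * ((p : ℂ) ^ 2 - 1 / 4) *
          (if p + q = 0 then (1 : ℂ) else 0) * c₀) • v
  rel_GpGp : ∀ (p q : ℤ) (v : V), Gp p (Gp q v) + Gp q (Gp p v) = 0
  rel_GmGm : ∀ (p q : ℤ) (v : V), Gm p (Gm q v) + Gm q (Gm p v) = 0

namespace RamondRep

variable {V : Type} [AddCommGroup V] [Module ℂ V]

/-- The weight space `V_μ = {v ∈ V : L₀ v = μ v}`. -/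
def wt (ρ : RamondRep V) (μ : ℂ) : Submodule ℂ V :=
  Module.End.eigenspace (ρ.L 0) μ

/-- The parity components, indexed by `ZMod 2`. -/
def parity (ρ : RamondRep V) (τ : ZMod 2) : Submodule ℂ V :=
  if τ = 0 then ρ.even else ρ.odd

/-- `V` is a weight module: it is the sum of its weight spaces. -/
def IsWeight (ρ : RamondRep V) : Prop := (⨆ μ : ℂ, ρ.wt μ) = ⊤

/-- `V` is cuspidal: a weight module with uniformly bounded weight multiplicities
in each parity. -/
def Cuspidal (ρ : RamondRep V) : Prop :=
  ρ.IsWeight ∧ ∃ p : ℕ, ∀ (μ : ℂ) (τ : ZMod 2),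
    Module.rank ℂ ↥(ρ.wt μ ⊓ ρ.parity τ) ≤ (p : Cardinal)

/-- A subspace invariant under all the operators. -/
def IsSubmod (ρ : RamondRep V) (W : Submodule ℂ V) : Prop :=
  (∀ (m : ℤ), ∀ v ∈ W, ρ.L m v ∈ W) ∧ (∀ (m : ℤ), ∀ v ∈ W, ρ.H m v ∈ W) ∧
    (∀ (m : ℤ), ∀ v ∈ W, ρ.Gp m v ∈ W) ∧ (∀ (m : ℤ), ∀ v ∈ W, ρ.Gm m v ∈ W)

/-- A graded subspace invariant under all the operators. -/
def IsGradedSubmod (ρ : RamondRep V) (W : Submodule ℂ V) : Prop :=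
  ρ.IsSubmod W ∧ W = (W ⊓ ρ.even) ⊔ (W ⊓ ρ.odd)

/-- The trivial representation: all operators act by zero. -/
def IsTrivialRep (ρ : RamondRep V) : Prop :=
  ∀ (m : ℤ) (v : V), ρ.L m v = 0 ∧ ρ.H m v = 0 ∧ ρ.Gp m v = 0 ∧ ρ.Gm m v = 0

/-- `V` is simple: nontrivial, and its only graded submodules are `⊥` and `⊤`. -/
def IsSimple (ρ : RamondRep V) : Prop :=
  ¬ ρ.IsTrivialRep ∧
    ∀ W : Submodule ℂ V, ρ.IsGradedSubmod W → W = ⊥ ∨ W = ⊤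

/-- `V` is generated by `v` as a `𝔤`-module. -/
def GeneratedBy (ρ : RamondRep V) (v : V) : Prop :=
  ∀ W : Submodule ℂ V, ρ.IsSubmod W → v ∈ W → W = ⊤

/-- `V` is a highest weight module. -/
def IsHighestWeight (ρ : RamondRep V) : Prop :=
  ∃ v : V, v ≠ 0 ∧ ρ.GeneratedBy v ∧
    (∃ h h' : ℂ, ρ.L 0 v = h • v ∧ ρ.H 0 v = h' • v) ∧
    (∀ m : ℤ, 0 < m → ρ.L m v = 0 ∧ ρ.H m v = 0 ∧ ρ.Gp m v = 0 ∧ ρ.Gm m v = 0) ∧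
    ρ.Gp 0 v = 0

/-- `V` is a lowest weight module. -/
def IsLowestWeight (ρ : RamondRep V) : Prop :=
  ∃ v : V, v ≠ 0 ∧ ρ.GeneratedBy v ∧
    (∃ h h' : ℂ, ρ.L 0 v = h • v ∧ ρ.H 0 v = h' • v) ∧
    (∀ m : ℤ, m < 0 → ρ.L m v = 0 ∧ ρ.H m v = 0 ∧ ρ.Gp m v = 0 ∧ ρ.Gm m v = 0) ∧
    ρ.Gm 0 v = 0

end RamondRep

/-- The families `(u i)ᵢ, (upm i)ᵢ` (even, `upm = v^{+-}`) and `(up i)ᵢ, (um i)ᵢ`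
(odd) realize the `𝔤`-module `R_{a,b,c}` inside `(W, σ)`: together they form a
basis, spanning the even/odd parts as indicated, `c₀ = 0`, and the action is given
by the `R_{a,b,c}` formulas. -/
def RamondRep.IsRabc {W : Type} [AddCommGroup W] [Module ℂ W] (σ : RamondRep W)
    (u upm up um : ℤ → W) (a b c : ℂ) : Prop :=
  σ.c₀ = 0 ∧
  LinearIndependent ℂ (fun x : (Bool × Bool) × ℤ =>
    if x.1.1 then (if x.1.2 then um x.2 else up x.2)
    else (if x.1.2 then upm x.2 else u x.2)) ∧
  Submodule.span ℂ
    (Set.range u ∪ Set.range upm ∪ Set.range up ∪ Set.range um) = ⊤ ∧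
  σ.even = Submodule.span ℂ (Set.range u ∪ Set.range upm) ∧
  σ.odd = Submodule.span ℂ (Set.range up ∪ Set.range um) ∧
  (∀ m i : ℤ, σ.L m (u i) = (a + (i : ℂ) + b * (m : ℂ)) • u (m + i)) ∧
  (∀ m k : ℤ, σ.L m (up k) = (a + (k : ℂ) + (b - 1 / 2) * (m : ℂ)) • up (m + k)) ∧
  (∀ m k : ℤ, σ.L m (um k) = (a + (k : ℂ) + (b - 1 / 2) * (m : ℂ)) • um (m + k)) ∧
  (∀ m i : ℤ, σ.L m (upm i) = (a + (i : ℂ) + (b - 1) * (m : ℂ)) • upm (m + i) +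
    ((1 / 2 : ℂ) * (2 * b - c - 2) * (m : ℂ) ^ 2) • u (i + m)) ∧
  (∀ m i : ℤ, σ.H m (u i) = c • u (m + i)) ∧
  (∀ m k : ℤ, σ.H m (up k) = (c + 1) • up (m + k)) ∧
  (∀ m k : ℤ, σ.H m (um k) = (c - 1) • um (m + k)) ∧
  (∀ m i : ℤ, σ.H m (upm i) = c • upm (m + i) -
    ((m : ℂ) * (2 * b - c - 2)) • u (m + i)) ∧
  (∀ r i : ℤ, σ.Gp r (u i) = up (r + i)) ∧
  (∀ r i : ℤ, σ.Gm r (u i) = um (r + i)) ∧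
  (∀ r i : ℤ, σ.Gp r (up i) = 0) ∧
  (∀ r i : ℤ, σ.Gm r (um i) = 0) ∧
  (∀ r k : ℤ, σ.Gp r (um k) = upm (k + r) +
    ((c + 2 - 2 * b) * (r : ℂ)) • u (k + r)) ∧
  (∀ r k : ℤ, σ.Gm r (up k) = -upm (r + k) -
    ((2 * a + 2 * (k : ℂ) + (2 * b + c) * (r : ℂ))) • u (k + r)) ∧
  (∀ r i : ℤ, σ.Gm r (upm i) =
    (-(2 * a + 2 * (i : ℂ) + (2 * b + c - 2) * (r : ℂ))) • um (r + i)) ∧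
  (∀ r i : ℤ, σ.Gp r (upm i) = ((2 * b - c - 2) * (r : ℂ)) • up (r + i))

/-!
If `c₀ ≠ 0`, the Heisenberg pairs `H_{±1}` and `H_{±2}` force a weight multiplicity of at least
three, so `c₀ = 0`. The length bound then leaves only finitely many `H₀`-eigenvalues in a coset of
`ℤ`, and up to the mirror symmetry `H ↦ -H`, `G⁺ ↔ G⁻` the top one, `c`, is nonzero. A subspace of
this top row stable under `L` and `H` coinduces to a `𝔤`-submodule which meets the row in nothing
new; hence the row is simple, and a vector below it is determined by its images under `G⁺`.

On the top row the `Hₘ` generate a commutative algebra on which the `Lₘ` act by derivations. An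
element of degree zero is a scalar modulo the radical of the annihilator, and simplicity makes
that radical act by zero; differentiating the degree zero products `Hₙ(H₋₁)ⁿ` and `H₋ₙ(H₁)ⁿ` gives
`HₘHₙ = cHₘ₊ₙ`. Hence the operators `c⁻¹H₋ₘLₘ - a` preserve one weight space, satisfy a twisted
Witt relation and have a common eigenvector there, and the row contains a tensor density family
`w`. The differences `vⱼ = G₁⁻wⱼ₋₁ - G₀⁻wⱼ` satisfy the relations of the generating family of
`R_{a,b,c}`. For the excluded parameters every multiplicity is at most one.
-/

/-! ### Operators, ideals and derivations -/

theorem exists_eigenvector_mem {K V : Type*} [Field K] [IsAlgClosed K] [AddCommGroup V]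
    [Module K V] {S : Submodule K V} [FiniteDimensional K S] (hS : S ≠ ⊥) (f : Module.End K V)
    (hf : ∀ v ∈ S, f v ∈ S) : ∃ (χ : K) (v : V), v ∈ S ∧ v ≠ 0 ∧ f v = χ • v := by
  have := Submodule.nontrivial_iff_ne_bot.2 hS
  obtain ⟨χ, hχ⟩ := Module.End.exists_eigenvalue (f.restrict hf)
  obtain ⟨v, hv⟩ := hχ.exists_hasEigenvector
  exact ⟨χ, v, v.2, by simpa using hv.2, congrArg Subtype.val hv.apply_eq_smul⟩

theorem pow_finrank_apply_eq_zero {K V : Type*} [Field K] [AddCommGroup V] [Module K V]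
    {S : Submodule K V} [FiniteDimensional K S] {f : Module.End K V} (hf : ∀ v ∈ S, f v ∈ S)
    (hnil : ∀ v ∈ S, ∃ k : ℕ, (f ^ k) v = 0) {v : V} (hv : v ∈ S) :
    (f ^ Module.finrank K S) v = 0 := by
  have hpow (k : ℕ) (w : S) : ((f.restrict hf ^ k) w : V) = (f ^ k) w := by
    rw [Module.End.pow_restrict k]; rfl
  have hmem : (⟨v, hv⟩ : S) ∈ Module.End.maxGenEigenspace (f.restrict hf) 0 := by
    obtain ⟨k, hk⟩ := hnil v hv
    refine (Module.End.mem_maxGenEigenspace _ _ _).2 ⟨k, Subtype.ext ?_⟩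
    simpa [hpow] using hk
  rw [Module.End.maxGenEigenspace_eq_genEigenspace_finrank,
    Module.End.mem_genEigenspace_nat] at hmem
  simpa [hpow] using congrArg Subtype.val hmem

section Derivation

variable {K R : Type*} [Field K] [CharZero K] [CommRing R] [Algebra K R]

theorem derivation_mem_radical (d : Derivation K R R) {I : Ideal R} (hI : ∀ x ∈ I, d x ∈ I)
    {x : R} (hx : x ∈ I.radical) : d x ∈ I.radical := by
  suffices h : ∀ n e : ℕ, x ^ n * d x ^ e ∈ I → d x ∈ I.radical by
    obtain ⟨n, hn⟩ := hx
    exact h n 0 (by simpa using hn)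
  intro n
  induction n with
  | zero => exact fun e h => ⟨e, by simpa using h⟩
  | succ n ih =>
    refine fun e h => ih (2 * e + 1) ?_
    have hd : d (x ^ (n + 1) * d x ^ e) * d x ^ e ∈ I := I.mul_mem_right _ (hI _ h)
    have hrest : x ^ (n + 1) * d x ^ e * d (d x ^ e) ∈ I := I.mul_mem_right _ h
    have hn : ((n + 1 : ℕ) : K) • (x ^ n * d x ^ (2 * e + 1)) ∈ I := by
      convert I.sub_mem hd hrest using 1
      rw [Derivation.leibniz, Derivation.leibniz_pow d x (n + 1), Nat.cast_smul_eq_nsmul]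
      simp only [smul_eq_mul, nsmul_eq_mul, Nat.add_sub_cancel]
      ring
    exact (Submodule.smul_mem_iff (I.restrictScalars K)
      (Nat.cast_ne_zero.2 n.succ_ne_zero : ((n + 1 : ℕ) : K) ≠ 0)).1 hn

end Derivation

theorem mul_eq_apply_zero_mul_apply_add {Q : Type*} [CommSemigroup Q] {g : ℤ → Q}
    (hpos : ∀ n > 0, ∀ m, g n * g m = g (-1) * g (n + m + 1))
    (hneg : ∀ n < 0, ∀ m, g n * g m = g 1 * g (n + m + -1))
    (hzero : g 0 * g 0 = g 1 * g (-1)) (m n : ℤ) : g m * g n = g 0 * g (m + n) := by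
  have of_pos {m n : ℤ} (hn : 0 < n) (hmn : 0 < m + n) : g m * g n = g 0 * g (m + n) := by
    rw [mul_comm, hpos n hn, mul_comm (g 0), hpos _ hmn, add_zero, add_comm n]
  have of_neg {m n : ℤ} (hn : n < 0) (hmn : m + n < 0) : g m * g n = g 0 * g (m + n) := by
    rw [mul_comm, hneg n hn, mul_comm (g 0), hneg _ hmn, add_zero, add_comm n]
  rcases lt_trichotomy (m + n) 0 with hmn | hmn | hmn
  · rcases lt_or_ge n 0 with hn | hn
    · exact of_neg hn hmn
    · rw [mul_comm, add_comm]
      exact of_neg (by omega) (by omega)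
  · rw [hmn, hzero]
    rcases lt_trichotomy m 0 with hm | rfl | hm
    · rw [hneg m hm, hmn, zero_add]
    · rw [← hzero, (by omega : n = 0)]
    · rw [hpos m hm, hmn, zero_add, mul_comm]
  · rcases lt_or_ge 0 n with hn | hn
    · exact of_pos hn hmn
    · rw [mul_comm, add_comm]
      exact of_pos (by omega) (by omega)

/-! ### Loop modules -/

/-- A family `M` of subspaces, simple under operators `L k` and the action of elements `h n` of a
commutative ring `R`. As for the Virasoro and Heisenberg modes, `L k` and `h n` shift the index by
`k` and `n`, `L k` acts on `R` by a derivation with `h n ↦ n h (n + k)`, and `h 0` is a nonzero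
scalar on `M`. -/
structure SimpleLoopFamily {K R V : Type*} [Field K] [CommRing R] [Algebra K R] [AddCommGroup V]
    [Module K V] [Module R V] (M : ℤ → Submodule K V) (h : ℤ → R)
    (L : ℤ → Module.End K V) (d : ℤ → Derivation K R R) (C : K) (D : ℕ) : Prop where
  L_smul (k : ℤ) (x : R) (v : V) : L k (x • v) = x • L k v + d k x • v
  d_h (k n : ℤ) : d k (h n) = (n : K) • h (n + k)
  h_zero_smul {i : ℤ} {v : V} (hv : v ∈ M i) : h 0 • v = C • v
  ne_zero : C ≠ 0
  L_mem {k i : ℤ} {v : V} (hv : v ∈ M i) : L k v ∈ M (i + k)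
  h_mem {n i : ℤ} {v : V} (hv : v ∈ M i) : h n • v ∈ M (i + n)
  finiteDimensional (i : ℤ) : FiniteDimensional K (M i)
  finrank_le (i : ℤ) : Module.finrank K (M i) ≤ D
  exists_ne_bot : ∃ i, M i ≠ ⊥
  eq_bot_or_eq (N : ℤ → Submodule K V) (hN : ∀ i, N i ≤ M i)
    (hL : ∀ k i, ∀ v ∈ N i, L k v ∈ N (i + k)) (hh : ∀ n i, ∀ v ∈ N i, h n • v ∈ N (i + n)) :
    (∀ i, N i = ⊥) ∨ ∀ i, N i = M i

namespace SimpleLoopFamily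

variable {K R V : Type*} [Field K] [CommRing R] [AddCommGroup V] [Module K V] [Module R V]

/-- The ideal of elements of `R` killing all the subspaces `M i`. -/
def annihilator (R : Type*) [CommRing R] [Module R V] (M : ℤ → Submodule K V) : Ideal R :=
  ⨅ (i) (v : M i), LinearMap.ker (LinearMap.toSpanSingleton R V (v : V))

/-- `x` maps each `M i` to `M (i + n)`. -/
def HasDegree (M : ℤ → Submodule K V) (x : R) (n : ℤ) : Prop :=
  ∀ i, ∀ v ∈ M i, x • v ∈ M (i + n)

variable {M : ℤ → Submodule K V}

theorem mem_annihilator {x : R} : x ∈ annihilator R M ↔ ∀ i, ∀ v ∈ M i, x • v = 0 := by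
  simp [annihilator, Submodule.mem_iInf]

theorem HasDegree.smul_mem {x : R} (hx : HasDegree M x 0) {i : ℤ} {v : V} (hv : v ∈ M i) :
    x • v ∈ M i := by
  simpa only [add_zero] using hx i v hv

theorem HasDegree.mul {x y : R} {m n : ℤ} (hx : HasDegree M x m) (hy : HasDegree M y n) :
    HasDegree M (x * y) (m + n) := fun i v hv => by
  rw [mul_smul, add_comm m n, ← add_assoc]
  exact hx _ _ (hy _ _ hv)

theorem HasDegree.pow {x : R} {m : ℤ} (hx : HasDegree M x m) (n : ℕ) :
    HasDegree M (x ^ n) (n * m) := by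
  induction n with
  | zero => exact fun i v hv => by simpa using hv
  | succ n ih =>
    rw [pow_succ, Nat.cast_succ, add_one_mul]
    exact ih.mul hx

variable [Algebra K R]

section

variable {h : ℤ → R} {L : ℤ → Module.End K V} {d : ℤ → Derivation K R R} {C : K} {D : ℕ}
  (A : SimpleLoopFamily M h L d C D)

include A

theorem hasDegree_h (n : ℤ) : HasDegree M (h n) n := fun _ _ hv => A.h_mem hv

theorem derivation_mem_annihilator (k : ℤ) {x : R} (hx : x ∈ annihilator R M) :
    d k x ∈ annihilator R M := by
  rw [mem_annihilator] at hx ⊢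
  intro i v hv
  have hLx := A.L_smul k x v
  rwa [hx i v hv, map_zero, hx _ _ (A.L_mem hv), zero_add, eq_comm] at hLx

theorem pow_succ_smul_L_eq_zero {y : R} {v : V} {n : ℕ} (hv : y ^ n • v = 0) (k : ℤ) :
    y ^ (n + 1) • L k v = 0 := by
  have hLy := A.L_smul k (y ^ (n + 1)) v
  have hd : d k (y ^ (n + 1)) = ((n + 1 : ℕ) : R) * d k y * y ^ n := by
    rw [Derivation.leibniz_pow]
    simp only [smul_eq_mul, nsmul_eq_mul, Nat.add_sub_cancel]
    ring
  have hv' : y ^ (n + 1) • v = 0 := by rw [pow_succ', mul_smul, hv, smul_zero]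
  rwa [hd, mul_smul _ (y ^ n), hv, hv', smul_zero, map_zero, add_zero, eq_comm] at hLy

end

section

variable [IsScalarTower K R V]

theorem HasDegree.sub_algebraMap {x : R} (hx : HasDegree M x 0) (χ : K) :
    HasDegree M (x - algebraMap K R χ) 0 := fun i v hv => by
  rw [sub_smul, algebraMap_smul]
  exact sub_mem (hx i v hv) (by simpa using Submodule.smul_mem _ χ hv)

variable {h : ℤ → R} {L : ℤ → Module.End K V} {d : ℤ → Derivation K R R} {C : K} {D : ℕ}
  (A : SimpleLoopFamily M h L d C D)

include A

theorem exists_sub_algebraMap_mem_radical [IsAlgClosed K] {x : R} (hx : HasDegree M x 0) :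
    ∃ χ : K, x - algebraMap K R χ ∈ (annihilator R M).radical := by
  let φ : R →ₐ[K] Module.End K V := Algebra.lsmul K K V
  have φ_pow (y : R) (n : ℕ) (v : V) : (φ y ^ n) v = y ^ n • v := by rw [← map_pow]; rfl
  obtain ⟨i₀, hi₀⟩ := A.exists_ne_bot
  have := A.finiteDimensional i₀
  obtain ⟨χ, v₀, hv₀, hv₀0, hχ⟩ := exists_eigenvector_mem hi₀ (φ x)
    fun _ => hx.smul_mem
  set y := x - algebraMap K R χ with hy
  let gen : Submodule K V := Module.End.maxGenEigenspace (φ y) 0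
  have mem_gen {v : V} : v ∈ gen ↔ ∃ n : ℕ, y ^ n • v = 0 := by
    simp [gen, Module.End.mem_maxGenEigenspace, φ_pow]
  have hgen (i : ℤ) : M i ⊓ gen = M i := by
    refine (A.eq_bot_or_eq (fun i => M i ⊓ gen) (fun i => inf_le_left) ?_ ?_).resolve_left
      (fun hbot => hv₀0 ?_) i
    · rintro k i v ⟨hv, hvg⟩
      obtain ⟨n, hn⟩ := mem_gen.1 hvg
      exact ⟨A.L_mem hv, mem_gen.2 ⟨n + 1, A.pow_succ_smul_L_eq_zero hn k⟩⟩
    · rintro k i v ⟨hv, hvg⟩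
      obtain ⟨n, hn⟩ := mem_gen.1 hvg
      exact ⟨A.h_mem hv, mem_gen.2 ⟨n, by rw [smul_comm, hn, smul_zero]⟩⟩
    · have hχ : x • v₀ = χ • v₀ := hχ
      rw [← Submodule.mem_bot K, ← hbot i₀]
      exact ⟨hv₀, mem_gen.2 ⟨1, by rw [pow_one, hy, sub_smul, hχ, algebraMap_smul, sub_self]⟩⟩
  refine ⟨χ, D, mem_annihilator.2 fun i v hv => ?_⟩
  have := A.finiteDimensional i
  obtain ⟨e, he⟩ := Nat.exists_eq_add_of_le' (A.finrank_le i)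
  have hnil := pow_finrank_apply_eq_zero (S := M i) (f := φ y)
    (fun _ => (hx.sub_algebraMap χ).smul_mem)
    (fun v hv => by simpa only [φ_pow] using mem_gen.1 ((hgen i).ge hv).2) hv
  rw [he, pow_add, mul_smul, ← φ_pow y (Module.finrank K (M i)), hnil, smul_zero]

theorem algebraMap_mem_radical_iff {χ : K} :
    algebraMap K R χ ∈ (annihilator R M).radical ↔ χ = 0 := by
  refine ⟨fun ⟨n, hn⟩ => ?_, fun h => by rw [h, map_zero]; exact zero_mem _⟩
  obtain ⟨i, hi⟩ := A.exists_ne_bot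
  obtain ⟨v, hv, hv0⟩ := exists_mem_ne_zero_of_ne_bot hi
  have hnv := mem_annihilator.1 hn i v hv
  rw [← map_pow, algebraMap_smul] at hnv
  exact eq_zero_of_pow_eq_zero ((smul_eq_zero.1 hnv).resolve_right hv0)

theorem h_zero_sub_mem : h 0 - algebraMap K R C ∈ annihilator R M :=
  mem_annihilator.2 fun i v hv => by
    rw [sub_smul, A.h_zero_smul hv, algebraMap_smul, sub_self]

theorem h_zero_notMem_radical : h 0 ∉ (annihilator R M).radical := fun h0 =>
  A.ne_zero <| A.algebraMap_mem_radical_iff.1 <| by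
    simpa using sub_mem h0 (Ideal.le_radical A.h_zero_sub_mem)

theorem exists_ne_zero_degree_zero_radical_smul_eq_zero {i : ℤ} {S : Submodule K V} (hSM : S ≤ M i)
    (hS : S ≠ ⊥) (hstab : ∀ x : R, HasDegree M x 0 → ∀ v ∈ S, x • v ∈ S) :
    ∃ v ∈ S, v ≠ 0 ∧ ∀ x ∈ (annihilator R M).radical, HasDegree M x 0 → x • v = 0 := by
  have := A.finiteDimensional i
  induction hr : Module.finrank K S using Nat.strong_induction_on generalizing S with
  | _ r ih =>
    by_cases hkill : ∀ x ∈ (annihilator R M).radical, HasDegree M x 0 → ∀ v ∈ S, x • v = 0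
    · obtain ⟨v, hv, hv0⟩ := exists_mem_ne_zero_of_ne_bot hS
      exact ⟨v, hv, hv0, fun x hx hdeg => hkill x hx hdeg v hv⟩
    push Not at hkill
    obtain ⟨x, ⟨n, hn⟩, hdeg, w, hw, hxw⟩ := hkill
    have : FiniteDimensional K S := Submodule.finiteDimensional_of_le hSM
    let T : Submodule K V := S ⊓ LinearMap.ker (Algebra.lsmul K K V x : V →ₗ[K] V)
    have mem_T {v : V} : v ∈ T ↔ v ∈ S ∧ x • v = 0 := Iff.rfl
    have hT : T ≠ ⊥ := by
      intro hbot
      have hinj {v : V} (hv : v ∈ S) (h0 : x • v = 0) : v = 0 := by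
        rw [← Submodule.mem_bot K, ← hbot]; exact ⟨hv, h0⟩
      have hpow (k : ℕ) : x ^ k • w ∈ S := hstab _ (by simpa using hdeg.pow k) w hw
      have hne (k : ℕ) : x ^ k • w ≠ 0 := by
        induction k with
        | zero => exact fun h0 => hxw (by rw [← one_smul R w, ← pow_zero x, h0, smul_zero])
        | succ k ih => exact fun h0 => ih (hinj (hpow k) (by rwa [← mul_smul, ← pow_succ']))
      exact hne n (mem_annihilator.1 hn i w (hSM hw))
    have hlt : T < S := lt_of_le_of_ne inf_le_left fun hTS => hxw (mem_T.1 (hTS.ge hw)).2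
    obtain ⟨v, hv, hrest⟩ := ih _ (hr ▸ Submodule.finrank_lt_finrank_of_lt hlt)
      (inf_le_left.trans hSM) hT
      (fun y hy v hv => mem_T.2 ⟨hstab y hy v (mem_T.1 hv).1, by
        rw [smul_comm, (mem_T.1 hv).2, smul_zero]⟩) rfl
    exact ⟨v, (mem_T.1 hv).1, hrest⟩

variable [CharZero K]

theorem h_one_mul_h_neg_one_notMem_radical : h 1 * h (-1) ∉ (annihilator R M).radical := by
  intro hmem
  have hd (k : ℤ) {x : R} : x ∈ (annihilator R M).radical → d k x ∈ (annihilator R M).radical :=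
    derivation_mem_radical (d k) fun x hx => A.derivation_mem_annihilator k hx
  have hsq : h 1 ^ 2 * algebraMap K R C ∈ (annihilator R M).radical := by
    have h1 := Ideal.mul_mem_left _ (h 1) (hd 1 hmem)
    have h2 := Ideal.mul_mem_left _ (h 2) hmem
    have h3 := Ideal.mul_mem_left _ (h 1 ^ 2) (Ideal.le_radical A.h_zero_sub_mem)
    rw [Derivation.leibniz, A.d_h, A.d_h] at h1
    convert sub_mem (sub_mem h2 h1) h3 using 1
    norm_num
    ring
  have h1 : h 1 ∈ (annihilator R M).radical := by
    have hu : IsUnit (algebraMap K R C) := (IsUnit.mk0 C A.ne_zero).map _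
    exact Ideal.radical_isRadical _ ⟨2, (Ideal.mul_unit_mem_iff_mem _ hu).1 hsq⟩
  refine A.h_zero_notMem_radical ?_
  simpa [A.d_h] using hd (-1) h1

theorem eq_zero_of_h_one_mul_h_neg_one_smul_eq_zero [IsAlgClosed K] {i : ℤ} {v : V} (hv : v ∈ M i)
    (h0 : (h 1 * h (-1)) • v = 0) : v = 0 := by
  have hdeg : HasDegree M (h 1 * h (-1)) 0 := by
    simpa using (A.hasDegree_h 1).mul (A.hasDegree_h (-1))
  obtain ⟨χ, n, hn⟩ := A.exists_sub_algebraMap_mem_radical hdeg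
  have hχ : χ ≠ 0 := by
    rintro rfl
    exact A.h_one_mul_h_neg_one_notMem_radical ⟨n, by simpa using hn⟩
  have hpow (k : ℕ) : (h 1 * h (-1) - algebraMap K R χ) ^ k • v = (-χ) ^ k • v := by
    induction k with
    | zero => simp
    | succ k ih =>
      rw [pow_succ, mul_smul, sub_smul, h0, algebraMap_smul, zero_sub, ← neg_smul, smul_comm, ih,
        smul_smul, ← pow_succ']
  have hzero := mem_annihilator.1 hn i v hv
  rw [hpow] at hzero
  exact (smul_eq_zero.1 hzero).resolve_left (pow_ne_zero _ (neg_ne_zero.2 hχ))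

variable [IsAlgClosed K]

theorem eq_zero_of_h_pow_smul_eq_zero {s : ℤ} (hs : s = 1 ∨ s = -1) (k : ℕ) {i : ℤ} {v : V}
    (hv : v ∈ M i) (h0 : h s ^ k • v = 0) : v = 0 := by
  induction k with
  | zero => simpa using h0
  | succ k ih =>
    refine ih (A.eq_zero_of_h_one_mul_h_neg_one_smul_eq_zero ((A.hasDegree_h s).pow k _ _ hv) ?_)
    rw [pow_succ', mul_smul] at h0
    rcases hs with rfl | rfl
    · rw [mul_comm, mul_smul, h0, smul_zero]
    · rw [mul_smul, h0, smul_zero]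

theorem exists_ne_zero_radical_smul_eq_zero :
    ∃ i, ∃ v ∈ M i, v ≠ 0 ∧
      ∀ (n : ℤ), ∀ x ∈ (annihilator R M).radical, HasDegree M x n → x • v = 0 := by
  obtain ⟨i, hi⟩ := A.exists_ne_bot
  obtain ⟨v, hv, hv0, hkill⟩ := A.exists_ne_zero_degree_zero_radical_smul_eq_zero le_rfl hi
    fun x hx _ => hx.smul_mem
  refine ⟨i, v, hv, hv0, fun n x hx hdeg => ?_⟩
  obtain ⟨s, hs, hns⟩ : ∃ s : ℤ, (s = 1 ∨ s = -1) ∧ (n.natAbs : ℤ) * s + n = 0 := by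
    rcases le_total 0 n with hn | hn
    · exact ⟨-1, Or.inr rfl, by omega⟩
    · exact ⟨1, Or.inl rfl, by omega⟩
  refine A.eq_zero_of_h_pow_smul_eq_zero hs n.natAbs (hdeg i v hv) ?_
  rw [← mul_smul]
  exact hkill _ (Ideal.mul_mem_left _ _ hx) (hns ▸ ((A.hasDegree_h s).pow _).mul hdeg)

theorem mem_annihilator_of_mem_radical {n : ℤ} {x : R} (hx : x ∈ (annihilator R M).radical)
    (hdeg : HasDegree M x n) : x ∈ annihilator R M := by
  let N (i : ℤ) : Submodule K V :=
    M i ⊓ ⨅ (y : R) (_ : y ∈ (annihilator R M).radical ∧ ∃ n, HasDegree M y n),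
      LinearMap.ker (Algebra.lsmul K K V y : V →ₗ[K] V)
  have mem_N {i : ℤ} {v : V} : v ∈ N i ↔ v ∈ M i ∧
      ∀ y ∈ (annihilator R M).radical, ∀ n, HasDegree M y n → y • v = 0 := by
    simp [N, Submodule.mem_iInf]
  have hN : ∀ i, N i = M i := by
    refine (A.eq_bot_or_eq N (fun i => inf_le_left) ?_ ?_).resolve_left fun hbot => ?_
    · intro k i v hv
      rw [mem_N] at hv ⊢
      refine ⟨A.L_mem hv.1, fun y hy n hn => ?_⟩
      have hdy : d k y • v = 0 := by
        refine hv.2 _ (derivation_mem_radical _ (fun x => A.derivation_mem_annihilator k) hy)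
          (n + k) fun i w hw => ?_
        rw [← add_sub_cancel_left (y • L k w) (d k y • w), ← A.L_smul]
        have h1 := A.L_mem (k := k) (hn _ _ hw)
        have h2 := hn _ _ (A.L_mem (k := k) hw)
        rw [add_right_comm] at h2
        rw [← add_assoc]
        exact sub_mem h1 h2
      have hLy := A.L_smul k y v
      rwa [hv.2 y hy n hn, map_zero, hdy, add_zero, eq_comm] at hLy
    · intro m i v hv
      rw [mem_N] at hv ⊢
      exact ⟨A.h_mem hv.1, fun y hy n hn => by rw [smul_comm, hv.2 y hy n hn, smul_zero]⟩
    · obtain ⟨i, v, hv, hv0, hkill⟩ := A.exists_ne_zero_radical_smul_eq_zero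
      refine hv0 ((Submodule.mem_bot K).1 ?_)
      rw [← hbot i]
      exact mem_N.2 ⟨hv, fun y hy n => hkill n y hy⟩
  exact mem_annihilator.2 fun i v hv => (mem_N.1 ((hN i).ge hv)).2 x hx n hdeg

theorem derivation_mem_annihilator_of_degree_zero {x : R} (hx : HasDegree M x 0) (k : ℤ) :
    d k x ∈ annihilator R M := by
  obtain ⟨χ, hχ⟩ := A.exists_sub_algebraMap_mem_radical hx
  have hmem := A.derivation_mem_annihilator k
    (A.mem_annihilator_of_mem_radical hχ (hx.sub_algebraMap χ))
  rwa [map_sub, Derivation.map_algebraMap, sub_zero] at hmem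

theorem mem_annihilator_of_h_pow_mul_mem {s : ℤ} (hs : s = 1 ∨ s = -1) (k : ℕ) {x : R} {n : ℤ}
    (hx : HasDegree M x n) (hmem : h s ^ k * x ∈ annihilator R M) : x ∈ annihilator R M :=
  mem_annihilator.2 fun i v hv => A.eq_zero_of_h_pow_smul_eq_zero hs k (hx i v hv) <| by
    rw [← mul_smul]; exact mem_annihilator.1 hmem i v hv

theorem h_mul_h_sub_mem {s : ℤ} (hs : s = 1 ∨ s = -1) {n : ℕ} (hn : 0 < n) (m : ℤ) :
    h (s * n) * h m - h (-s) * h (s * n + m + s) ∈ annihilator R M := by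
  have hs' : -s = 1 ∨ -s = -1 := by omega
  have hdeg : HasDegree M (h (s * n) * h (-s) ^ n) 0 := by
    convert (A.hasDegree_h (s * n)).mul ((A.hasDegree_h (-s)).pow n) using 1
    ring
  have hd : d (m + s) (h (s * n) * h (-s) ^ n) = (-(s * n : ℤ) : K) •
      (h (-s) ^ (n - 1) * (h (s * n) * h m - h (-s) * h (s * n + m + s))) := by
    obtain ⟨n, rfl⟩ := Nat.exists_eq_succ_of_ne_zero hn.ne'
    rw [Derivation.leibniz, Derivation.leibniz_pow, A.d_h, A.d_h,
      neg_add_cancel_comm_assoc, add_assoc]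
    simp only [smul_eq_mul, nsmul_eq_mul, Nat.succ_eq_add_one, Nat.add_sub_cancel]
    simp only [Algebra.smul_def, map_neg, map_intCast]
    push_cast
    ring
  have hne : (-(s * n : ℤ) : K) ≠ 0 := by
    rw [neg_ne_zero, Int.cast_ne_zero]
    exact mul_ne_zero (by omega) (by omega)
  have hmem := A.derivation_mem_annihilator_of_degree_zero hdeg (m + s)
  rw [hd] at hmem
  have hmul : h (-s) ^ (n - 1) * (h (s * n) * h m - h (-s) * h (s * n + m + s)) ∈
      annihilator R M :=
    (Submodule.smul_mem_iff ((annihilator R M).restrictScalars K) hne).1 hmem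
  refine A.mem_annihilator_of_h_pow_mul_mem hs' _ (n := s * n + m) (fun i v hv => ?_) hmul
  rw [sub_smul]
  refine sub_mem ((A.hasDegree_h _).mul (A.hasDegree_h m) i v hv) ?_
  convert (A.hasDegree_h (-s)).mul (A.hasDegree_h (s * n + m + s)) i v hv using 2
  ring

theorem h_zero_mul_h_zero_sub_mem : h 0 * h 0 - h 1 * h (-1) ∈ annihilator R M := by
  have hdeg : HasDegree M (h 0 * h 0 - h 1 * h (-1)) 0 := fun i v hv => by
    rw [sub_smul]
    refine sub_mem ((A.hasDegree_h 0).mul (A.hasDegree_h 0) i v hv) ?_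
    exact (A.hasDegree_h 1).mul (A.hasDegree_h (-1)) i v hv
  have h1 := Ideal.mul_mem_left _ (h 0 * h (-1)) (A.h_mul_h_sub_mem (.inl rfl) one_pos 0)
  have h2 := Ideal.mul_mem_left _ (h (-1) * h 2) (A.h_mul_h_sub_mem (.inr rfl) one_pos 0)
  have h3 := Ideal.mul_mem_left _ (h 1 * h (-1)) (A.h_mul_h_sub_mem (.inl rfl) two_pos (-2))
  refine A.mem_annihilator_of_h_pow_mul_mem (.inl rfl) 1 hdeg
    (A.mem_annihilator_of_h_pow_mul_mem (.inr rfl) 1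
      (by simpa using (A.hasDegree_h 1).mul hdeg) ?_)
  convert add_mem (add_mem h1 h2) h3 using 1
  norm_num
  ring

theorem h_smul_h_smul (m n : ℤ) {i : ℤ} {v : V} (hv : v ∈ M i) :
    h m • h n • v = C • h (m + n) • v := by
  let g (n : ℤ) : R ⧸ annihilator R M := Ideal.Quotient.mk _ (h n)
  have hg : g m * g n = g 0 * g (m + n) := by
    refine mul_eq_apply_zero_mul_apply_add (fun n hn m => ?_) (fun n hn m => ?_) ?_ m n
    · lift n to ℕ using hn.le
      have hmem := A.h_mul_h_sub_mem (.inl rfl) (Int.natCast_pos.1 hn) m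
      rw [one_mul] at hmem
      simpa only [map_mul] using Ideal.Quotient.eq.2 hmem
    · obtain ⟨n, rfl⟩ : ∃ k : ℕ, n = -1 * k := ⟨n.natAbs, by omega⟩
      have hmem := A.h_mul_h_sub_mem (.inr rfl) (n := n) (by omega) m
      rw [neg_neg] at hmem
      simpa only [map_mul] using Ideal.Quotient.eq.2 hmem
    · simpa only [map_mul] using Ideal.Quotient.eq.2 A.h_zero_mul_h_zero_sub_mem
  rw [← map_mul, ← map_mul, Ideal.Quotient.eq] at hg
  have hv0 := mem_annihilator.1 hg i v hv
  rwa [sub_smul, mul_smul, mul_smul, A.h_zero_smul (A.h_mem hv), sub_eq_zero] at hv0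

end

end SimpleLoopFamily

theorem exists_derivation_map_eq_commutator {K R A : Type*} [CommRing K] [CommRing R]
    [Algebra K R] [Ring A] [Algebra K A] {φ : R →ₐ[K] A} (hφ : Function.Injective φ) {x : A}
    (hx : ∀ r, ∃ r', φ r' = x * φ r - φ r * x) :
    ∃ d : Derivation K R R, ∀ r, φ (d r) = x * φ r - φ r * x := by
  choose d hd using hx
  refine ⟨Derivation.mk' ⟨⟨d, fun r s => hφ ?_⟩, fun c r => hφ ?_⟩ fun r s => hφ ?_, hd⟩
  · simp only [map_add, hd]
    noncomm_ring
  · simp only [map_smul, hd, RingHom.id_apply, mul_smul_comm, smul_mul_assoc, smul_sub]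
  · have hsd : φ s * φ (d r) = φ (d r) * φ s := by rw [← map_mul, mul_comm, map_mul]
    change φ (d (r * s)) = φ (r * d s + s * d r)
    rw [map_add, map_mul, map_mul, hsd, hd, hd, hd, map_mul]
    noncomm_ring

theorem commutator_mem_adjoin {K A : Type*} [CommRing K] [Ring A] [Algebra K A] {s : Set A} {x : A}
    (hx : ∀ y ∈ s, x * y - y * x ∈ Algebra.adjoin K s) {y : A} (hy : y ∈ Algebra.adjoin K s) :
    x * y - y * x ∈ Algebra.adjoin K s := by
  induction hy using Algebra.adjoin_induction with
  | mem y hy => exact hx y hy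
  | algebraMap r => simpa only [Algebra.commutes, sub_self] using zero_mem _
  | add y z _ _ hy hz =>
    convert add_mem hy hz using 1
    noncomm_ring
  | mul y z hys hzs hy hz =>
    convert add_mem (mul_mem hy hzs) (mul_mem hys hz) using 1
    noncomm_ring

open scoped IsMulCommutative in
theorem loop_mul_apply_of_simple {K V : Type*} [Field K] [CharZero K] [IsAlgClosed K]
    [AddCommGroup V] [Module K V] {M : ℤ → Submodule K V} {L H : ℤ → Module.End K V} {C : K} {D : ℕ}
    (hHH : ∀ m n, Commute (H m) (H n))
    (hLH : ∀ m n : ℤ, L m * H n - H n * L m = (n : K) • H (n + m))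
    (hH0 : ∀ i, ∀ v ∈ M i, H 0 v = C • v) (hC : C ≠ 0)
    (hL : ∀ m i, ∀ v ∈ M i, L m v ∈ M (i + m)) (hH : ∀ m i, ∀ v ∈ M i, H m v ∈ M (i + m))
    (hfin : ∀ i, FiniteDimensional K (M i)) (hrank : ∀ i, Module.finrank K (M i) ≤ D)
    (hne : ∃ i, M i ≠ ⊥)
    (hsimple : ∀ N : ℤ → Submodule K V, (∀ i, N i ≤ M i) →
      (∀ m i, ∀ v ∈ N i, L m v ∈ N (i + m)) → (∀ m i, ∀ v ∈ N i, H m v ∈ N (i + m)) →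
      (∀ i, N i = ⊥) ∨ ∀ i, N i = M i)
    (m n : ℤ) {i : ℤ} {v : V} (hv : v ∈ M i) : H m (H n v) = C • H (m + n) v := by
  let P := Algebra.adjoin K (Set.range H)
  have : IsMulCommutative P := Algebra.isMulCommutative_adjoin K <| by
    rintro _ ⟨m, rfl⟩ _ ⟨n, rfl⟩
    exact hHH m n
  let h (n : ℤ) : P := ⟨H n, Algebra.subset_adjoin ⟨n, rfl⟩⟩
  have hder (k : ℤ) : ∃ d : Derivation K P P, ∀ x : P,
      (d x : Module.End K V) = L k * x - x * L k := by
    refine exists_derivation_map_eq_commutator (φ := P.val) Subtype.val_injective fun x => ?_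
    refine ⟨⟨_, commutator_mem_adjoin ?_ x.2⟩, rfl⟩
    rintro _ ⟨n, rfl⟩
    rw [hLH]
    exact P.smul_mem (h _).2 _
  choose d hd using hder
  have A : SimpleLoopFamily M h L d C D :=
    { L_smul := fun k x v => by
        change L k (x.1 v) = x.1 (L k v) + (d k x).1 v
        rw [hd]
        simp
      d_h := fun k n => Subtype.ext ((hd k (h n)).trans (hLH k n))
      h_zero_smul := fun hv => hH0 _ _ hv
      ne_zero := hC
      L_mem := fun hv => hL _ _ _ hv
      h_mem := fun hv => hH _ _ _ hv
      finiteDimensional := hfin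
      finrank_le := hrank
      exists_ne_bot := hne
      eq_bot_or_eq := hsimple }
  exact A.h_smul_h_smul m n hv

/-! ### Twisted Witt families -/

theorem exists_eigenvector_max_re {X : Type*} [AddCommGroup X] [Module ℂ X]
    [FiniteDimensional ℂ X] [Nontrivial X] (f : Module.End ℂ X) :
    ∃ (b : ℂ) (v : X), v ≠ 0 ∧ f v = b • v ∧ ∀ χ, f.HasEigenvalue χ → χ.re ≤ b.re := by
  obtain ⟨χ, hχ⟩ := Module.End.exists_eigenvalue f
  obtain ⟨b, hb, hmax⟩ := Set.exists_max_image _ Complex.re f.finite_hasEigenvalue ⟨χ, hχ⟩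
  obtain ⟨v, hv⟩ := hb.exists_hasEigenvector
  exact ⟨b, v, hv.2, hv.apply_eq_smul, hmax⟩

section WittFamily

variable {X : Type*} [AddCommGroup X] [Module ℂ X]

/-- The relations satisfied by `d m = t⁻ᵐ Lₘ - L₀`, where the `Lₘ` span the Witt algebra and `t` is
an invertible operator with `[Lₘ, tⁿ] = n tᵐ⁺ⁿ`. Its one-dimensional representations are
`d m = b m`. -/
structure IsTwistedWittFamily (d : ℤ → Module.End ℂ X) : Prop where
  apply_zero (v : X) : d 0 v = 0
  commutator_apply (m n : ℤ) (v : X) : d m (d n v) - d n (d m v) =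
    ((n : ℂ) - m) • d (m + n) v - (n : ℂ) • d n v + (m : ℂ) • d m v

namespace IsTwistedWittFamily

variable {d : ℤ → Module.End ℂ X}

theorem neg_reflect (hd : IsTwistedWittFamily d) : IsTwistedWittFamily fun m => -d (-m) where
  apply_zero v := by simp [hd.apply_zero]
  commutator_apply m n v := by
    have h := hd.commutator_apply (-m) (-n) v
    simp only [LinearMap.neg_apply, map_neg, neg_neg]
    rw [h, ← neg_add]
    push_cast
    module

theorem apply_neg_natCast_of_max_re (hd : IsTwistedWittFamily d) {b : ℂ} {v : X}
    (hv : d 1 v = b • v) (hmax : ∀ χ, (d 1).HasEigenvalue χ → χ.re ≤ b.re) (n : ℕ) :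
    d (-n) v = (b * (-n : ℤ)) • v := by
  have hstep (m : ℤ) : d 1 (d m v - (b * m) • v) = (b - m) • (d m v - (b * m) • v) +
      ((m : ℂ) - 1) • (d (1 + m) v - (b * (1 + m : ℤ)) • v) := by
    have h := sub_eq_iff_eq_add.1 (hd.commutator_apply 1 m v)
    rw [map_sub, map_smul, h, hv, map_smul]
    push_cast
    module
  induction n with
  | zero => simp [hd.apply_zero]
  | succ n ih =>
    by_contra hne
    have h := hstep (-(n + 1 : ℕ))
    rw [show (1 + -(n + 1 : ℕ) : ℤ) = -n by push_cast; ring, ih, sub_self, smul_zero, add_zero] at h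
    have hre := hmax _ (Module.End.hasEigenvalue_of_hasEigenvector
      ⟨Module.End.mem_eigenspace_iff.2 h, sub_ne_zero.2 hne⟩)
    norm_num at hre
    linarith

variable [FiniteDimensional ℂ X] [Nontrivial X]

theorem exists_common_eigenvector (hd : IsTwistedWittFamily d) :
    ∃ (b : ℂ) (v : X), v ≠ 0 ∧ ∀ m : ℤ, d m v = (b * m) • v := by
  obtain ⟨b, v, hv0, hv, hmax⟩ := exists_eigenvector_max_re (d 1)
  obtain ⟨b', v', hv'0, hv', hmax'⟩ := exists_eigenvector_max_re (-d (-1))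
  have hneg := hd.apply_neg_natCast_of_max_re hv hmax
  have hv_neg : (-d (-1)) v = b • v := by
    rw [LinearMap.neg_apply, ← Nat.cast_one, hneg 1]
    simp
  have hv'_one : d 1 v' = b' • v' := by
    have h := hd.neg_reflect.apply_neg_natCast_of_max_re hv' hmax' 1
    simpa using h
  have hle : b'.re ≤ b.re := hmax _ <| Module.End.hasEigenvalue_of_hasEigenvector
    ⟨Module.End.mem_eigenspace_iff.2 hv'_one, hv'0⟩
  have hpos := hd.neg_reflect.apply_neg_natCast_of_max_re hv_neg
    fun χ hχ => (hmax' χ hχ).trans hle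
  refine ⟨b, v, hv0, fun m => ?_⟩
  obtain ⟨n, rfl | rfl⟩ := m.eq_nat_or_neg
  · simpa using hpos n
  · simpa using hneg n

end IsTwistedWittFamily

end WittFamily

/-! ### Multiplicity bounds -/

theorem iSupIndep_inf.{u} {α : Type*} {ι κ : Type u} [CompleteLattice α] [IsModularLattice α]
    [IsCompactlyGenerated α] {f : ι → α} {g : κ → α} (hf : iSupIndep f) (hg : iSupIndep g) :
    iSupIndep fun x : ι × κ => f x.1 ⊓ g x.2 := by
  let F : (b : Bool) → (bif b then ι else κ) → α := Bool.rec g f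
  let e : ι × κ → (b : Bool) → (bif b then ι else κ) := fun x => Bool.rec x.2 x.1
  have he : Function.Injective e := fun x y h =>
    Prod.ext (congrFun h true) (congrFun h false)
  have h := (iSupIndep.iInf F (Bool.rec hg hf)).comp he
  simpa only [Function.comp_def, iInf_bool_eq] using h

theorem card_le_of_linearIndependent_of_rank_le {K V ι : Type*} [Field K] [AddCommGroup V]
    [Module K V] [Fintype ι] {M : Submodule K V} {d : ℕ} (hM : Module.rank K M ≤ d) {v : ι → V}
    (hv : LinearIndependent K v) (hmem : ∀ i, v i ∈ M) : Fintype.card ι ≤ d := by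
  have hv' : LinearIndependent K fun i => (⟨v i, hmem i⟩ : M) :=
    LinearIndependent.of_comp M.subtype hv
  have h := hv'.cardinal_lift_le_rank.trans (Cardinal.lift_le.2 hM)
  simpa using h

open Classical in
theorem le_card_filter_mem_of_twoSided {S : Set ℤ} {i : ℤ} {R : ℕ} (hR : |i| ≤ R)
    (hS : ∀ n : ℤ, 0 < n → i + n ∈ S ∨ i - n ∈ S) (N : ℕ) :
    N ≤ ((Finset.Icc (-(N + R : ℤ)) (N + R)).filter (· ∈ S)).card := by
  rw [abs_le] at hR
  let f : ℕ → ℤ := fun n => if i + (n + 1) ∈ S then i + (n + 1) else i - (n + 1)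
  have hmaps : Set.MapsTo f (Finset.range N)
      ((Finset.Icc (-(N + R : ℤ)) (N + R)).filter (· ∈ S)) := by
    intro n hn
    have hn : n < N := by simpa using hn
    have := hS (n + 1) (by lia)
    simp only [Finset.coe_filter, Finset.mem_Icc, Set.mem_ofPred_eq, f]
    split_ifs with h
    · exact ⟨by lia, h⟩
    · exact ⟨by lia, this.resolve_left h⟩
  have hinj : Set.InjOn f (Finset.range N) := by
    intro n _ m _ h
    simp only [f] at h
    split_ifs at h <;> lia
  simpa using Finset.card_le_card_of_injOn f hmaps hinj

theorem card_le_two_mul_of_twoSided {κ : Type*} {K : Finset κ} {S : κ → Set ℤ} {d : ℕ}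
    (hS : ∀ k ∈ K, ∃ i, ∀ n : ℤ, 0 < n → i + n ∈ S k ∨ i - n ∈ S k)
    (hd : ∀ (j : ℤ) (T : Finset κ), (∀ k ∈ T, j ∈ S k) → T.card ≤ d) : K.card ≤ 2 * d := by
  classical
  choose! i hi using hS
  set R : ℕ := K.sup fun k => (i k).natAbs
  have hR : ∀ k ∈ K, |i k| ≤ R := fun k hk => by
    rw [Int.abs_eq_natAbs]
    exact_mod_cast Finset.le_sup (f := fun k => (i k).natAbs) hk
  set N : ℕ := d * (2 * R + 1) + 1 with hN
  set J := Finset.Icc (-(N + R : ℤ)) (N + R)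
  have hJ : J.card = 2 * (N + R) + 1 := by rw [Int.card_Icc]; lia
  have hcount : K.card * N ≤ J.card * d := calc
    K.card * N ≤ ∑ k ∈ K, (J.filter (· ∈ S k)).card := by
      rw [← smul_eq_mul]
      exact Finset.card_nsmul_le_sum _ _ _ fun k hk =>
        le_card_filter_mem_of_twoSided (hR k hk) (hi k hk) N
    _ = ∑ j ∈ J, (K.filter (j ∈ S ·)).card :=
      Finset.sum_card_bipartiteAbove_eq_sum_card_bipartiteBelow fun k j => j ∈ S k
    _ ≤ J.card * d := by
      rw [← smul_eq_mul]
      exact Finset.sum_le_card_nsmul _ _ _ fun j _ => hd j _ fun k hk => (Finset.mem_filter.1 hk).2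
  by_contra! hlt
  have : (2 * d + 1) * N ≤ K.card * N := Nat.mul_le_mul_right N hlt
  nlinarith

theorem rank_le_one_of_iSupIndep_of_span_eq_top {K V ι κ : Type*} [Field K] [AddCommGroup V]
    [Module K V] {E : ι → Submodule K V} (hE : iSupIndep E) {v : κ → V} {f : κ → ι}
    (hf : Function.Injective f) (hv : ∀ x, v x ∈ E (f x)) (hspan : span K (Set.range v) = ⊤)
    (j : ι) : Module.rank K (E j) ≤ 1 := by
  let F (j : ι) := span K (v '' (f ⁻¹' {j}))
  have hFE : F ≤ E := fun j => span_le.2 <| by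
    rintro _ ⟨x, rfl, rfl⟩
    exact hv x
  have hF : iSup F = ⊤ := by
    rw [eq_top_iff, ← hspan, span_le]
    rintro _ ⟨x, rfl⟩
    exact mem_iSup_of_mem (f x) (subset_span ⟨x, rfl, rfl⟩)
  rw [← (hE.le_iff_eq_of_iSup_eq_top hF).1 hFE]
  have hsub : (v '' (f ⁻¹' {j})).Subsingleton := (Set.subsingleton_singleton.preimage hf).image v
  exact (rank_span_le _).trans (Cardinal.mk_le_one_iff_set_subsingleton.2 hsub)

/-! ### The Ramond algebra -/

namespace RamondRep

variable {V : Type} [AddCommGroup V] [Module ℂ V]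

/-- The pullback of `ρ` along the mirror automorphism `Hₘ ↦ -Hₘ`, `Gₘ⁺ ↔ Gₘ⁻` of the Ramond
algebra. -/
def flip (ρ : RamondRep V) : RamondRep V :=
  { ρ with
    H := fun m => -ρ.H m
    Gp := ρ.Gm
    Gm := ρ.Gp
    H_even := fun m v hv => neg_mem (ρ.H_even m v hv)
    H_odd := fun m v hv => neg_mem (ρ.H_odd m v hv)
    Gp_even := ρ.Gm_even
    Gp_odd := ρ.Gm_odd
    Gm_even := ρ.Gp_even
    Gm_odd := ρ.Gp_odd
    rel_HH := fun m n v => by simpa using ρ.rel_HH m n v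
    rel_LH := fun m n v => by
      simp only [LinearMap.neg_apply, map_neg, smul_neg, ← ρ.rel_LH m n v]
      abel
    rel_LGp := ρ.rel_LGm
    rel_LGm := ρ.rel_LGp
    rel_HGp := fun m n v => by
      simp only [LinearMap.neg_apply, map_neg, ← neg_sub', ρ.rel_HGm, neg_neg]
    rel_HGm := fun m n v => by
      simp only [LinearMap.neg_apply, map_neg, ← neg_sub', ρ.rel_HGp]
    rel_GpGm := fun p q v => by
      simp only [LinearMap.neg_apply]
      rw [add_comm, ρ.rel_GpGm q p v, add_comm q p]
      split_ifs with h
      · obtain rfl : q = -p := by lia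
        push_cast
        module
      · module
    rel_GpGp := ρ.rel_GmGm
    rel_GmGm := ρ.rel_GpGp }

/-- The charge space `{v ∈ V : H₀ v = χ v}`. -/
def charge (ρ : RamondRep V) (χ : ℂ) : Submodule ℂ V :=
  Module.End.eigenspace (ρ.H 0) χ

variable {ρ : RamondRep V} {μ χ : ℂ} {τ : ZMod 2} {m : ℤ} {v : V}

theorem mem_wt : v ∈ ρ.wt μ ↔ ρ.L 0 v = μ • v :=
  Module.End.mem_eigenspace_iff

theorem mem_charge : v ∈ ρ.charge χ ↔ ρ.H 0 v = χ • v :=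
  Module.End.mem_eigenspace_iff

theorem L_mem_wt (hv : v ∈ ρ.wt μ) : ρ.L m v ∈ ρ.wt (μ + m) := by
  rw [mem_wt] at hv ⊢
  rw [sub_eq_iff_eq_add.1 (ρ.rel_LL 0 m v), hv]
  rcases eq_or_ne m 0 with rfl | hm
  · simp [hv]
  · simp only [zero_add, hm, if_false, map_smul, Int.cast_zero]
    module

theorem H_mem_wt (hv : v ∈ ρ.wt μ) : ρ.H m v ∈ ρ.wt (μ + m) := by
  rw [mem_wt] at hv ⊢
  rw [sub_eq_iff_eq_add.1 (ρ.rel_LH 0 m v), hv, zero_add, map_smul]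
  module

theorem Gp_mem_wt (hv : v ∈ ρ.wt μ) : ρ.Gp m v ∈ ρ.wt (μ + m) := by
  rw [mem_wt] at hv ⊢
  rw [sub_eq_iff_eq_add.1 (ρ.rel_LGp 0 m v), hv, add_zero, map_smul, Int.cast_zero]
  module

theorem L_mem_charge (hv : v ∈ ρ.charge χ) : ρ.L m v ∈ ρ.charge χ := by
  rw [mem_charge] at hv ⊢
  have h : ρ.L m (ρ.H 0 v) = ρ.H 0 (ρ.L m v) := by simpa [sub_eq_zero] using ρ.rel_LH m 0 v
  rw [← h, hv, map_smul]

theorem H_mem_charge (hv : v ∈ ρ.charge χ) : ρ.H m v ∈ ρ.charge χ := by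
  rw [mem_charge] at hv ⊢
  simpa [hv, sub_eq_zero] using ρ.rel_HH 0 m v

theorem Gp_mem_charge (hv : v ∈ ρ.charge χ) : ρ.Gp m v ∈ ρ.charge (χ + 1) := by
  rw [mem_charge] at hv ⊢
  rw [sub_eq_iff_eq_add.1 (ρ.rel_HGp 0 m v), hv, zero_add, map_smul]
  module

theorem isCompl_parity (ρ : RamondRep V) (τ : ZMod 2) :
    IsCompl (ρ.parity τ) (ρ.parity (τ + 1)) := by
  fin_cases τ
  exacts [ρ.grading, ρ.grading.symm]

theorem L_mem_parity (hv : v ∈ ρ.parity τ) : ρ.L m v ∈ ρ.parity τ := by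
  fin_cases τ
  exacts [ρ.L_even m v hv, ρ.L_odd m v hv]

theorem H_mem_parity (hv : v ∈ ρ.parity τ) : ρ.H m v ∈ ρ.parity τ := by
  fin_cases τ
  exacts [ρ.H_even m v hv, ρ.H_odd m v hv]

theorem Gp_mem_parity (hv : v ∈ ρ.parity τ) : ρ.Gp m v ∈ ρ.parity (τ + 1) := by
  fin_cases τ
  exacts [ρ.Gp_even m v hv, ρ.Gp_odd m v hv]

theorem Gm_mem_parity (hv : v ∈ ρ.parity τ) : ρ.Gm m v ∈ ρ.parity (τ + 1) :=
  Gp_mem_parity (ρ := ρ.flip) hv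

theorem iSupIndep_parity (ρ : RamondRep V) : iSupIndep ρ.parity := by
  refine (iSupIndep_pair (i := (0 : ZMod 2)) (j := 1) (by decide) (by decide)).2 ?_
  exact ρ.grading.disjoint

/-- The vectors of weight `a + i`, charge `c + k` and parity `τ + k`. Rows of constant `k` are
preserved by `L` and `H`, and `G⁺` (`G⁻`) raises (lowers) the row by one. -/
def jointWt (ρ : RamondRep V) (a c : ℂ) (τ : ZMod 2) (i k : ℤ) : Submodule ℂ V :=
  ρ.wt (a + i) ⊓ ρ.charge (c + k) ⊓ ρ.parity (τ + k)

variable {a c : ℂ} {i k : ℤ}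

theorem mem_jointWt : v ∈ ρ.jointWt a c τ i k ↔
    v ∈ ρ.wt (a + i) ∧ v ∈ ρ.charge (c + k) ∧ v ∈ ρ.parity (τ + k) := by
  simp only [jointWt, mem_inf, and_assoc]

theorem jointWt_add_charge (ρ : RamondRep V) (a c : ℂ) (τ : ZMod 2) (i k l : ℤ) :
    ρ.jointWt a (c + l) (τ + l) i k = ρ.jointWt a c τ i (l + k) := by
  simp only [jointWt, Int.cast_add, add_assoc]

theorem jointWt_flip (ρ : RamondRep V) (a c : ℂ) (τ : ZMod 2) (i k : ℤ) :
    ρ.flip.jointWt a (-c) τ i k = ρ.jointWt a c τ i (-k) := by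
  have hcharge : ρ.flip.charge (-c + k) = ρ.charge (c + (-k : ℤ)) := by
    ext v
    rw [mem_charge, mem_charge]
    change -(ρ.H 0 v) = _ ↔ _
    rw [neg_eq_iff_eq_neg, ← neg_smul, neg_add, neg_neg, Int.cast_neg]
  have hparity : τ + ((-k : ℤ) : ZMod 2) = τ + k := by rw [Int.cast_neg, ZMod.neg_eq_self_mod_two]
  rw [jointWt, jointWt, hcharge, hparity]
  rfl

theorem L_mem_jointWt (hv : v ∈ ρ.jointWt a c τ i k) : ρ.L m v ∈ ρ.jointWt a c τ (i + m) k := by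
  rw [mem_jointWt] at *
  rw [Int.cast_add, ← add_assoc]
  exact ⟨L_mem_wt hv.1, L_mem_charge hv.2.1, L_mem_parity hv.2.2⟩

theorem H_mem_jointWt (hv : v ∈ ρ.jointWt a c τ i k) : ρ.H m v ∈ ρ.jointWt a c τ (i + m) k := by
  rw [mem_jointWt] at *
  rw [Int.cast_add, ← add_assoc]
  exact ⟨H_mem_wt hv.1, H_mem_charge hv.2.1, H_mem_parity hv.2.2⟩

theorem Gp_mem_jointWt (hv : v ∈ ρ.jointWt a c τ i k) :
    ρ.Gp m v ∈ ρ.jointWt a c τ (i + m) (k + 1) := by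
  rw [mem_jointWt] at *
  push_cast
  simp only [← add_assoc]
  exact ⟨Gp_mem_wt hv.1, Gp_mem_charge hv.2.1, Gp_mem_parity hv.2.2⟩

theorem Gm_mem_jointWt (hv : v ∈ ρ.jointWt a c τ i k) :
    ρ.Gm m v ∈ ρ.jointWt a c τ (i + m) (k - 1) := by
  rw [← neg_neg k, ← jointWt_flip] at hv
  rw [show k - 1 = -(-k + 1) by ring, ← jointWt_flip]
  exact Gp_mem_jointWt (ρ := ρ.flip) hv

theorem iSupIndep_jointWt (ρ : RamondRep V) (a c : ℂ) (τ : ZMod 2) :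
    iSupIndep fun x : ℤ × ℤ => ρ.jointWt a c τ x.1 x.2 := by
  have hcast (z : ℂ) : Function.Injective fun n : ℤ => z + n :=
    (add_right_injective z).comp Int.cast_injective
  exact (iSupIndep_inf ((Module.End.eigenspaces_iSupIndep (ρ.L 0)).comp (hcast a))
    ((Module.End.eigenspaces_iSupIndep (ρ.H 0)).comp (hcast c))).mono fun _ => inf_le_left

theorem IsSimple.flip (h : ρ.IsSimple) : ρ.flip.IsSimple := by
  refine ⟨fun ht => h.1 fun m v => ?_, fun W hW => h.2 W ⟨⟨hW.1.1, fun m v hv => ?_, ?_, ?_⟩, ?_⟩⟩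
  · obtain ⟨hL, hH, hGp, hGm⟩ := ht m v
    exact ⟨hL, neg_eq_zero.1 hH, hGm, hGp⟩
  · exact neg_mem_iff.1 (hW.1.2.1 m v hv)
  exacts [hW.1.2.2.2, hW.1.2.2.1, hW.2]

theorem isGradedSubmod_span {s : Set V} (hs : ∀ v ∈ s, ∃ τ, v ∈ ρ.parity τ)
    (hL : ∀ m, ∀ v ∈ s, ρ.L m v ∈ span ℂ s) (hH : ∀ m, ∀ v ∈ s, ρ.H m v ∈ span ℂ s)
    (hGp : ∀ m, ∀ v ∈ s, ρ.Gp m v ∈ span ℂ s) (hGm : ∀ m, ∀ v ∈ s, ρ.Gm m v ∈ span ℂ s) :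
    ρ.IsGradedSubmod (span ℂ s) := by
  have hmap {f : V →ₗ[ℂ] V} (hf : ∀ v ∈ s, f v ∈ span ℂ s) : ∀ v ∈ span ℂ s, f v ∈ span ℂ s :=
    fun _ hv => (span_le (p := (span ℂ s).comap f)).2 hf hv
  refine ⟨⟨fun m => hmap (hL m), fun m => hmap (hH m), fun m => hmap (hGp m),
    fun m => hmap (hGm m)⟩, le_antisymm (span_le.2 fun v hv => ?_) (sup_le inf_le_left inf_le_left)⟩
  have hvW := subset_span (R := ℂ) hv
  obtain ⟨τ, hτ⟩ := hs v hv
  fin_cases τ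
  exacts [mem_sup_left ⟨hvW, hτ⟩, mem_sup_right ⟨hvW, hτ⟩]

theorem IsSimple.span_eq_top (h : ρ.IsSimple) {s : Set V} (hs : ∀ v ∈ s, ∃ τ, v ∈ ρ.parity τ)
    (hL : ∀ m, ∀ v ∈ s, ρ.L m v ∈ span ℂ s) (hH : ∀ m, ∀ v ∈ s, ρ.H m v ∈ span ℂ s)
    (hGp : ∀ m, ∀ v ∈ s, ρ.Gp m v ∈ span ℂ s) (hGm : ∀ m, ∀ v ∈ s, ρ.Gm m v ∈ span ℂ s)
    (hne : ∃ v ∈ s, v ≠ 0) : span ℂ s = ⊤ := by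
  refine (h.2 _ (isGradedSubmod_span hs hL hH hGp hGm)).resolve_left fun hbot => ?_
  obtain ⟨v, hv, hv0⟩ := hne
  exact hv0 (span_eq_bot.1 hbot v hv)

/-- A submodule presented by its components in the joint weight spaces. -/
structure IsJointWtSubmod (ρ : RamondRep V) (a c : ℂ) (τ : ZMod 2) (F : ℤ → ℤ → Submodule ℂ V) :
    Prop where
  le i k : F i k ≤ ρ.jointWt a c τ i k
  L_mem m {i k : ℤ} {v : V} : v ∈ F i k → ρ.L m v ∈ F (i + m) k
  H_mem m {i k : ℤ} {v : V} : v ∈ F i k → ρ.H m v ∈ F (i + m) k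
  Gp_mem m {i k : ℤ} {v : V} : v ∈ F i k → ρ.Gp m v ∈ F (i + m) (k + 1)
  Gm_mem m {i k : ℤ} {v : V} : v ∈ F i k → ρ.Gm m v ∈ F (i + m) (k - 1)

theorem isJointWtSubmod_jointWt (ρ : RamondRep V) (a c : ℂ) (τ : ZMod 2) :
    ρ.IsJointWtSubmod a c τ (ρ.jointWt a c τ) where
  le _ _ := le_rfl
  L_mem _ _ _ _ := L_mem_jointWt
  H_mem _ _ _ _ := H_mem_jointWt
  Gp_mem _ _ _ _ := Gp_mem_jointWt
  Gm_mem _ _ _ _ := Gm_mem_jointWt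

theorem IsJointWtSubmod.iSup_eq_top {F : ℤ → ℤ → Submodule ℂ V} (hF : ρ.IsJointWtSubmod a c τ F)
    (h : ρ.IsSimple) (hne : F i k ≠ ⊥) : ⨆ x : ℤ × ℤ, F x.1 x.2 = ⊤ := by
  have hspan : span ℂ (⋃ x : ℤ × ℤ, (F x.1 x.2 : Set V)) = ⨆ x : ℤ × ℤ, F x.1 x.2 := by
    simp only [span_iUnion, span_eq]
  have hmem {f : V →ₗ[ℂ] V} (hf : ∀ i k, ∀ v ∈ F i k, ∃ j l, f v ∈ F j l) :
      ∀ v ∈ ⋃ x : ℤ × ℤ, (F x.1 x.2 : Set V), f v ∈ span ℂ (⋃ x : ℤ × ℤ, (F x.1 x.2 : Set V)) := by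
    intro v hv
    obtain ⟨x, hx⟩ := Set.mem_iUnion.1 hv
    obtain ⟨j, l, hjl⟩ := hf _ _ v hx
    exact subset_span (Set.mem_iUnion.2 ⟨(j, l), hjl⟩)
  rw [← hspan]
  refine h.span_eq_top (fun v hv => ?_) (fun m => hmem fun _ _ _ hv => ⟨_, _, hF.L_mem m hv⟩)
    (fun m => hmem fun _ _ _ hv => ⟨_, _, hF.H_mem m hv⟩)
    (fun m => hmem fun _ _ _ hv => ⟨_, _, hF.Gp_mem m hv⟩)
    (fun m => hmem fun _ _ _ hv => ⟨_, _, hF.Gm_mem m hv⟩) ?_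
  · obtain ⟨x, hx⟩ := Set.mem_iUnion.1 hv
    exact ⟨_, (mem_jointWt.1 (hF.le _ _ hx)).2.2⟩
  · obtain ⟨v, hv, hv0⟩ := exists_mem_ne_zero_of_ne_bot hne
    exact ⟨v, Set.mem_iUnion.2 ⟨(i, k), hv⟩, hv0⟩

theorem IsJointWtSubmod.eq_jointWt {F : ℤ → ℤ → Submodule ℂ V} (hF : ρ.IsJointWtSubmod a c τ F)
    (h : ρ.IsSimple) (hne : F i k ≠ ⊥) (j l : ℤ) : F j l = ρ.jointWt a c τ j l :=
  congrFun (((ρ.iSupIndep_jointWt a c τ).le_iff_eq_of_iSup_eq_top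
    (f := fun x : ℤ × ℤ => F x.1 x.2) (hF.iSup_eq_top h hne)).1 fun x => hF.le x.1 x.2) (j, l)

/-- A simple module whose weight multiplicities in each parity are at most two, with equality
attained. -/
structure IsSimpleOfLengthTwo (ρ : RamondRep V) : Prop where
  isSimple : ρ.IsSimple
  rank_le (μ : ℂ) (τ : ZMod 2) : Module.rank ℂ ↥(ρ.wt μ ⊓ ρ.parity τ) ≤ 2
  exists_rank_eq : ∃ (μ : ℂ) (τ : ZMod 2), Module.rank ℂ ↥(ρ.wt μ ⊓ ρ.parity τ) = 2

namespace IsSimpleOfLengthTwo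

theorem flip (h : ρ.IsSimpleOfLengthTwo) : ρ.flip.IsSimpleOfLengthTwo :=
  ⟨h.isSimple.flip, h.rank_le, h.exists_rank_eq⟩

theorem rank_jointWt_le (h : ρ.IsSimpleOfLengthTwo) (a c : ℂ) (τ : ZMod 2) (i k : ℤ) :
    Module.rank ℂ (ρ.jointWt a c τ i k) ≤ 2 :=
  (rank_mono (inf_le_inf_right _ inf_le_left)).trans (h.rank_le (a + i) (τ + k))

theorem finiteDimensional_wt_inf_parity (h : ρ.IsSimpleOfLengthTwo) (μ : ℂ) (τ : ZMod 2) :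
    FiniteDimensional ℂ ↥(ρ.wt μ ⊓ ρ.parity τ) :=
  Module.rank_lt_aleph0_iff.1 ((h.rank_le μ τ).trans_lt (Cardinal.natCast_lt_aleph0 (n := 2)))

theorem finiteDimensional_jointWt (h : ρ.IsSimpleOfLengthTwo) (a c : ℂ) (τ : ZMod 2) (i k : ℤ) :
    FiniteDimensional ℂ (ρ.jointWt a c τ i k) :=
  have := h.finiteDimensional_wt_inf_parity (a + i) (τ + k)
  finiteDimensional_of_le (inf_le_inf_right _ inf_le_left)

theorem span_range_union_ne_top (h : ρ.IsSimpleOfLengthTwo) {a : ℂ} {τ : ZMod 2} {x y : ℤ → V}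
    (hx : ∀ i : ℤ, x i ∈ ρ.wt (a + i) ⊓ ρ.parity τ)
    (hy : ∀ i : ℤ, y i ∈ ρ.wt (a + i) ⊓ ρ.parity (τ + 1)) :
    span ℂ (Set.range x ∪ Set.range y) ≠ ⊤ := by
  intro hspan
  obtain ⟨μ, σ, hr⟩ := h.exists_rank_eq
  let f : ℤ ⊕ ℤ → ℂ × ZMod 2 := Sum.elim (fun i => (a + i, τ)) fun i => (a + i, τ + 1)
  have hf : Function.Injective f := by
    rintro (i | i) (j | j) hij <;> simp_all [f]
  have hle := rank_le_one_of_iSupIndep_of_span_eq_top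
    (iSupIndep_inf (Module.End.eigenspaces_iSupIndep (ρ.L 0)) ρ.iSupIndep_parity) hf
    (v := Sum.elim x y) (by rintro (i | i); exacts [hx i, hy i]) (by rwa [Set.Sum.elim_range])
    (μ, σ)
  have : (2 : Cardinal) ≤ 1 := hr.symm.trans_le hle
  norm_num at this

end IsSimpleOfLengthTwo

end RamondRep

/-! ### Density families -/

theorem eq_of_isCompl_of_sup_eq_top {α : Type*} [Lattice α] [BoundedOrder α] [IsModularLattice α]
    {p q x y : α} (hpq : IsCompl p q) (hx : x ≤ p) (hy : y ≤ q) (hxy : x ⊔ y = ⊤) : p = x :=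
  (eq_of_le_of_inf_le_of_sup_le hx (hpq.inf_eq_bot.le.trans bot_le)
    (le_top.trans (hxy.ge.trans (sup_le_sup_left hy x)))).symm

theorem linearIndependent_prod_of_iSupIndep {K V ι κ : Type*} [Field K] [AddCommGroup V]
    [Module K V] {E : ι → Submodule K V} (hE : iSupIndep E) {v : ι → κ → V}
    (hv : ∀ i x, v i x ∈ E i) (hli : ∀ i, LinearIndependent K (v i)) :
    LinearIndependent K fun x : κ × ι => v x.2 x.1 := by
  have hspan (i : ι) : span K (Set.range (v i)) ≤ E i := span_le.2 (Set.range_subset_iff.2 (hv i))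
  have hsigma : LinearIndependent K fun x : Σ _ : ι, κ => v x.1 x.2 :=
    linearIndependent_iUnion_finite hli fun i t _ hit => (hE i).mono (hspan i) <|
      iSup₂_le fun j hj => (hspan j).trans
        (le_iSup₂_of_le j (ne_of_mem_of_not_mem hj hit) le_rfl)
  exact hsigma.comp _ ((Equiv.sigmaEquivProd ι κ).symm.injective.comp Prod.swap_injective)

theorem linearIndependent_ite_bool {K V : Type*} [Field K] [AddCommGroup V] [Module K V]
    {x y : V} (hx : x ≠ 0) (hxy : ∀ r : K, r • x ≠ y) :
    LinearIndependent K fun e : Bool => if e then y else x := by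
  have hpair := (LinearIndependent.pair_iff' hx).2 hxy
  convert hpair.comp _ finTwoEquiv.symm.injective with e
  cases e <;> rfl

namespace RamondRep

variable {V : Type} [AddCommGroup V] [Module ℂ V] {ρ : RamondRep V}

/-- A family carrying the tensor density action of `L` and `H`, on which `Gᵣ^±` depends on the
index `r + i` only. It plays the role of `(vᵢ)` in `R_{a,b,c}`, placed in parity `τ`. -/
structure IsDensityFamily (ρ : RamondRep V) (a b c : ℂ) (τ : ZMod 2) (u : ℤ → V) : Prop where
  c₀_eq_zero : ρ.c₀ = 0
  mem_parity (i : ℤ) : u i ∈ ρ.parity τ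
  ne_zero (i : ℤ) : u i ≠ 0
  L_apply (m i : ℤ) : ρ.L m (u i) = (a + i + b * m) • u (m + i)
  H_apply (m i : ℤ) : ρ.H m (u i) = c • u (m + i)
  Gp_apply (r i : ℤ) : ρ.Gp r (u i) = ρ.Gp 0 (u (r + i))
  Gm_apply (r i : ℤ) : ρ.Gm r (u i) = ρ.Gm 0 (u (r + i))

theorem Gp_Gp_self (ρ : RamondRep V) (p : ℤ) (v : V) : ρ.Gp p (ρ.Gp p v) = 0 :=
  (smul_eq_zero.1 ((two_smul ℂ _).trans (ρ.rel_GpGp p p v))).resolve_left two_ne_zero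

theorem Gp_zero_mem_wt_inf_parity {μ : ℂ} {τ : ZMod 2} {v : V} (hv : v ∈ ρ.wt μ ⊓ ρ.parity τ) :
    ρ.Gp 0 v ∈ ρ.wt μ ⊓ ρ.parity (τ + 1) :=
  ⟨by simpa using Gp_mem_wt (m := 0) hv.1, Gp_mem_parity hv.2⟩

namespace IsDensityFamily

variable {a b c : ℂ} {τ : ZMod 2} {u : ℤ → V} (h : ρ.IsDensityFamily a b c τ u)
include h

theorem flip : ρ.flip.IsDensityFamily a b (-c) τ u where
  c₀_eq_zero := h.c₀_eq_zero
  mem_parity := h.mem_parity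
  ne_zero := h.ne_zero
  L_apply := h.L_apply
  H_apply m i := (congrArg Neg.neg (h.H_apply m i)).trans (neg_smul _ _).symm
  Gp_apply := h.Gm_apply
  Gm_apply := h.Gp_apply

theorem L_Gp (m k : ℤ) :
    ρ.L m (ρ.Gp 0 (u k)) = (a + k + (b - 1 / 2) * m) • ρ.Gp 0 (u (m + k)) := by
  rw [sub_eq_iff_eq_add.1 (ρ.rel_LGp m 0 (u k)), zero_add, h.Gp_apply m k, h.L_apply, map_smul]
  push_cast
  module

theorem L_Gm (m k : ℤ) :
    ρ.L m (ρ.Gm 0 (u k)) = (a + k + (b - 1 / 2) * m) • ρ.Gm 0 (u (m + k)) :=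
  h.flip.L_Gp m k

theorem H_Gp (m k : ℤ) : ρ.H m (ρ.Gp 0 (u k)) = (c + 1) • ρ.Gp 0 (u (m + k)) := by
  rw [sub_eq_iff_eq_add.1 (ρ.rel_HGp m 0 (u k)), add_zero, h.Gp_apply m k, h.H_apply, map_smul]
  module

theorem H_Gm (m k : ℤ) : ρ.H m (ρ.Gm 0 (u k)) = (c - 1) • ρ.Gm 0 (u (m + k)) := by
  rw [sub_eq_iff_eq_add.1 (ρ.rel_HGm m 0 (u k)), add_zero, h.Gm_apply m k, h.H_apply, map_smul]
  module

theorem Gp_Gp (r k : ℤ) : ρ.Gp r (ρ.Gp 0 (u k)) = 0 := by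
  simpa [h.Gp_apply r k, ρ.Gp_Gp_self] using ρ.rel_GpGp r 0 (u k)

theorem Gm_Gm (r k : ℤ) : ρ.Gm r (ρ.Gm 0 (u k)) = 0 :=
  h.flip.Gp_Gp r k

theorem Gp_Gm_add_Gm_Gp (p q n : ℤ) :
    ρ.Gp p (ρ.Gm 0 (u (n - p))) + ρ.Gm q (ρ.Gp 0 (u (n - q))) =
      (-2 * a - 2 * n + (2 - 2 * b + c) * p + (2 - 2 * b - c) * q) • u n := by
  have hrel := ρ.rel_GpGm p q (u (n - p - q))
  rw [h.Gm_apply, h.Gp_apply, h.L_apply, h.H_apply, h.c₀_eq_zero,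
    show q + (n - p - q) = n - p by ring, show p + (n - p - q) = n - q by ring,
    show p + q + (n - p - q) = n by ring] at hrel
  rw [hrel]
  push_cast
  module

theorem Gp_Gm (r k : ℤ) : ρ.Gp r (ρ.Gm 0 (u k)) =
    ρ.Gp 0 (ρ.Gm 0 (u (k + r))) + ((c + 2 - 2 * b) * r) • u (k + r) := by
  have hr := h.Gp_Gm_add_Gm_Gp r 0 (k + r)
  have h0 := h.Gp_Gm_add_Gm_Gp 0 0 (k + r)
  rw [sub_zero] at hr h0
  rw [add_sub_cancel_right] at hr
  rw [eq_sub_of_add_eq hr, eq_sub_of_add_eq h0]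
  push_cast
  module

theorem Gm_Gp (r k : ℤ) : ρ.Gm r (ρ.Gp 0 (u k)) =
    -ρ.Gp 0 (ρ.Gm 0 (u (r + k))) - (2 * a + 2 * k + (2 * b + c) * r) • u (k + r) := by
  have hr := h.Gp_Gm_add_Gm_Gp 0 r (r + k)
  rw [add_sub_cancel_left, sub_zero] at hr
  rw [eq_sub_of_add_eq' hr, add_comm k r]
  push_cast
  module

theorem L_Gp_Gm (m i : ℤ) : ρ.L m (ρ.Gp 0 (ρ.Gm 0 (u i))) =
    (a + i + (b - 1) * m) • ρ.Gp 0 (ρ.Gm 0 (u (m + i))) +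
      (1 / 2 * (2 * b - c - 2) * (m : ℂ) ^ 2) • u (i + m) := by
  rw [sub_eq_iff_eq_add.1 (ρ.rel_LGp m 0 (ρ.Gm 0 (u i))), zero_add, h.Gp_Gm m i, h.L_Gm, map_smul,
    add_comm i m]
  push_cast
  module

theorem H_Gp_Gm (m i : ℤ) : ρ.H m (ρ.Gp 0 (ρ.Gm 0 (u i))) =
    c • ρ.Gp 0 (ρ.Gm 0 (u (m + i))) - (m * (2 * b - c - 2)) • u (m + i) := by
  rw [sub_eq_iff_eq_add.1 (ρ.rel_HGp m 0 (ρ.Gm 0 (u i))), add_zero, h.Gp_Gm m i, h.H_Gm, map_smul,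
    add_comm i m]
  module

theorem Gm_Gp_Gm (r i : ℤ) : ρ.Gm r (ρ.Gp 0 (ρ.Gm 0 (u i))) =
    (-(2 * a + 2 * i + (2 * b + c - 2) * r)) • ρ.Gm 0 (u (r + i)) := by
  have hrel := ρ.rel_GpGm 0 r (ρ.Gm 0 (u i))
  rw [h.Gm_Gm, map_zero, zero_add, zero_add, h.L_Gm, h.H_Gm, h.c₀_eq_zero] at hrel
  rw [hrel]
  push_cast
  module

theorem Gp_Gp_Gm (r i : ℤ) : ρ.Gp r (ρ.Gp 0 (ρ.Gm 0 (u i))) =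
    ((2 * b - c - 2) * r) • ρ.Gp 0 (u (r + i)) := by
  have hrel := ρ.rel_GpGp r 0 (ρ.Gm 0 (u i))
  rw [h.Gp_Gm r i, map_add, Gp_Gp_self, zero_add, map_smul] at hrel
  rw [eq_neg_of_add_eq_zero_left hrel, add_comm i r]
  module

theorem mem (i : ℤ) : u i ∈ ρ.wt (a + i) ⊓ ρ.parity τ :=
  ⟨mem_wt.2 (by simp [h.L_apply]), h.mem_parity i⟩

theorem Gp_mem (i : ℤ) : ρ.Gp 0 (u i) ∈ ρ.wt (a + i) ⊓ ρ.parity (τ + 1) :=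
  Gp_zero_mem_wt_inf_parity (h.mem i)

theorem Gm_mem (i : ℤ) : ρ.Gm 0 (u i) ∈ ρ.wt (a + i) ⊓ ρ.parity (τ + 1) :=
  h.flip.Gp_mem i

theorem Gp_Gm_mem (i : ℤ) : ρ.Gp 0 (ρ.Gm 0 (u i)) ∈ ρ.wt (a + i) ⊓ ρ.parity τ := by
  simpa only [add_assoc, CharTwo.add_self_eq_zero, add_zero] using
    Gp_zero_mem_wt_inf_parity (h.Gm_mem i)

theorem span_eq_top (hρ : ρ.IsSimple) :
    span ℂ (Set.range u ∪ Set.range (ρ.Gp 0 ∘ ρ.Gm 0 ∘ u) ∪ Set.range (ρ.Gp 0 ∘ u) ∪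
      Set.range (ρ.Gm 0 ∘ u)) = ⊤ := by
  set s := Set.range u ∪ Set.range (ρ.Gp 0 ∘ ρ.Gm 0 ∘ u) ∪ Set.range (ρ.Gp 0 ∘ u) ∪
    Set.range (ρ.Gm 0 ∘ u)
  have hu (i : ℤ) : u i ∈ span ℂ s := subset_span (.inl (.inl (.inl ⟨i, rfl⟩)))
  have hupm (i : ℤ) : ρ.Gp 0 (ρ.Gm 0 (u i)) ∈ span ℂ s :=
    subset_span (.inl (.inl (.inr ⟨i, rfl⟩)))
  have hup (i : ℤ) : ρ.Gp 0 (u i) ∈ span ℂ s := subset_span (.inl (.inr ⟨i, rfl⟩))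
  have hum (i : ℤ) : ρ.Gm 0 (u i) ∈ span ℂ s := subset_span (.inr ⟨i, rfl⟩)
  refine hρ.span_eq_top ?_ (fun m => ?_) (fun m => ?_) (fun m => ?_) (fun m => ?_)
    ⟨u 0, .inl (.inl (.inl ⟨0, rfl⟩)), h.ne_zero 0⟩
  all_goals rintro v (((⟨i, rfl⟩ | ⟨i, rfl⟩) | ⟨i, rfl⟩) | ⟨i, rfl⟩)
  · exact ⟨τ, h.mem_parity i⟩
  · exact ⟨τ, (h.Gp_Gm_mem i).2⟩
  · exact ⟨τ + 1, (h.Gp_mem i).2⟩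
  · exact ⟨τ + 1, (h.Gm_mem i).2⟩
  · exact Set.mem_of_eq_of_mem (h.L_apply m i) (smul_mem _ _ (hu _))
  · exact Set.mem_of_eq_of_mem (h.L_Gp_Gm m i)
      (add_mem (smul_mem _ _ (hupm _)) (smul_mem _ _ (hu _)))
  · exact Set.mem_of_eq_of_mem (h.L_Gp m i) (smul_mem _ _ (hup _))
  · exact Set.mem_of_eq_of_mem (h.L_Gm m i) (smul_mem _ _ (hum _))
  · exact Set.mem_of_eq_of_mem (h.H_apply m i) (smul_mem _ _ (hu _))
  · exact Set.mem_of_eq_of_mem (h.H_Gp_Gm m i)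
      (sub_mem (smul_mem _ _ (hupm _)) (smul_mem _ _ (hu _)))
  · exact Set.mem_of_eq_of_mem (h.H_Gp m i) (smul_mem _ _ (hup _))
  · exact Set.mem_of_eq_of_mem (h.H_Gm m i) (smul_mem _ _ (hum _))
  · exact Set.mem_of_eq_of_mem (h.Gp_apply m i) (hup _)
  · exact Set.mem_of_eq_of_mem (h.Gp_Gp_Gm m i) (smul_mem _ _ (hup _))
  · exact Set.mem_of_eq_of_mem (h.Gp_Gp m i) (zero_mem _)
  · exact Set.mem_of_eq_of_mem (h.Gp_Gm m i) (add_mem (hupm _) (smul_mem _ _ (hu _)))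
  · exact Set.mem_of_eq_of_mem (h.Gm_apply m i) (hum _)
  · exact Set.mem_of_eq_of_mem (h.Gm_Gp_Gm m i) (smul_mem _ _ (hum _))
  · exact Set.mem_of_eq_of_mem (h.Gm_Gp m i) (sub_mem (neg_mem (hupm _)) (smul_mem _ _ (hu _)))
  · exact Set.mem_of_eq_of_mem (h.Gm_Gm m i) (zero_mem _)

theorem exists_Gp_ne_zero (hρ : ρ.IsSimpleOfLengthTwo) : ∃ i, ρ.Gp 0 (u i) ≠ 0 := by
  by_contra! h0
  refine hρ.span_range_union_ne_top h.mem h.Gm_mem ?_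
  rw [eq_top_iff, ← h.span_eq_top hρ.isSimple, span_le]
  rintro v (((⟨i, rfl⟩ | ⟨i, rfl⟩) | ⟨i, rfl⟩) | ⟨i, rfl⟩)
  · exact subset_span (.inl ⟨i, rfl⟩)
  · have hGmGp := h.Gm_Gp 0 i
    rw [h0, map_zero, zero_add, add_zero] at hGmGp
    refine Set.mem_of_eq_of_mem ?_ (smul_mem _ (-(2 * a + 2 * i + (2 * b + c) * (0 : ℤ)))
      (subset_span (.inl ⟨i, rfl⟩)))
    rw [neg_smul, Function.comp_apply, Function.comp_apply, ← add_eq_zero_iff_eq_neg,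
      ← neg_eq_zero, neg_add', ← hGmGp]
  · exact Set.mem_of_eq_of_mem (h0 i) (zero_mem _)
  · exact subset_span (.inr ⟨i, rfl⟩)

theorem exists_Gm_ne_zero (hρ : ρ.IsSimpleOfLengthTwo) : ∃ i, ρ.Gm 0 (u i) ≠ 0 :=
  h.flip.exists_Gp_ne_zero hρ.flip

theorem two_mul_sub_ne (hρ : ρ.IsSimpleOfLengthTwo) : 2 * b - c ≠ 2 := by
  intro hbc
  have hc : c = 2 * b - 2 := by linear_combination -hbc
  refine hρ.span_range_union_ne_top (x := ρ.Gp 0 ∘ ρ.Gm 0 ∘ u) (y := ρ.Gm 0 ∘ u)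
    h.Gp_Gm_mem h.Gm_mem ?_
  set s := Set.range (ρ.Gp 0 ∘ ρ.Gm 0 ∘ u) ∪ Set.range (ρ.Gm 0 ∘ u)
  have hupm (i : ℤ) : ρ.Gp 0 (ρ.Gm 0 (u i)) ∈ span ℂ s := subset_span (.inl ⟨i, rfl⟩)
  have hum (i : ℤ) : ρ.Gm 0 (u i) ∈ span ℂ s := subset_span (.inr ⟨i, rfl⟩)
  obtain ⟨j, hj⟩ := h.exists_Gm_ne_zero hρ
  refine hρ.isSimple.span_eq_top ?_ (fun m => ?_) (fun m => ?_) (fun m => ?_) (fun m => ?_)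
    ⟨ρ.Gm 0 (u j), .inr ⟨j, rfl⟩, hj⟩
  all_goals rintro v (⟨i, rfl⟩ | ⟨i, rfl⟩)
  · exact ⟨τ, (h.Gp_Gm_mem i).2⟩
  · exact ⟨τ + 1, (h.Gm_mem i).2⟩
  · exact Set.mem_of_eq_of_mem ((h.L_Gp_Gm m i).trans (by simp [hc]))
      (smul_mem _ (a + i + (b - 1) * m) (hupm (m + i)))
  · exact Set.mem_of_eq_of_mem (h.L_Gm m i) (smul_mem _ _ (hum _))
  · exact Set.mem_of_eq_of_mem ((h.H_Gp_Gm m i).trans (by simp [hc])) (smul_mem _ c (hupm (m + i)))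
  · exact Set.mem_of_eq_of_mem (h.H_Gm m i) (smul_mem _ _ (hum _))
  · exact Set.mem_of_eq_of_mem ((h.Gp_Gp_Gm m i).trans (by simp [hc])) (zero_mem _)
  · exact Set.mem_of_eq_of_mem ((h.Gp_Gm m i).trans (by simp [hc])) (hupm (i + m))
  · exact Set.mem_of_eq_of_mem (h.Gm_Gp_Gm m i) (smul_mem _ _ (hum _))
  · exact Set.mem_of_eq_of_mem (h.Gm_Gm m i) (zero_mem _)

theorem two_mul_add_ne (hρ : ρ.IsSimpleOfLengthTwo) : 2 * b + c ≠ 2 :=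
  sub_neg_eq_add (2 * b) c ▸ h.flip.two_mul_sub_ne hρ.flip

theorem smul_Gp_eq_zero {n : ℤ} (hn : ρ.Gp 0 (u n) = 0) (m s : ℤ) :
    ((2 * b - c - 2) * s + 2 * a + 2 * n + (2 * b + c) * (m - s - n)) • ρ.Gp 0 (u m) = 0 := by
  have hrel := congrArg (ρ.Gp s) (h.Gm_Gp (m - s - n) n)
  rw [hn, map_zero, map_zero, map_sub, map_neg, map_smul, h.Gp_Gp_Gm, h.Gp_apply s,
    show m - s - n + n = m - s by ring, show n + (m - s - n) = m - s by ring,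
    show s + (m - s) = m by ring] at hrel
  rw [← neg_eq_zero, hrel]
  push_cast
  module

theorem Gp_ne_zero (hρ : ρ.IsSimpleOfLengthTwo) (n : ℤ) : ρ.Gp 0 (u n) ≠ 0 := by
  intro hn
  obtain ⟨m, hm⟩ := h.exists_Gp_ne_zero hρ
  have key {k l : ℤ} (hk : ρ.Gp 0 (u k) = 0) (hl : ρ.Gp 0 (u l) ≠ 0) (s : ℤ) :
      (2 * b - c - 2) * s + 2 * a + 2 * k + (2 * b + c) * (l - s - k) = 0 :=
    (smul_eq_zero.1 (h.smul_Gp_eq_zero hk l s)).resolve_right hl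
  obtain rfl : c = -1 := by
    have hs0 := key hn hm 0
    have hs1 := key hn hm 1
    push_cast at hs0 hs1
    linear_combination (hs0 - hs1) / 2
  obtain ⟨l, hl⟩ := Set.Infinite.nonempty ((Set.toFinite {m, n}).infinite_compl)
  obtain ⟨hlm, hln⟩ : l ≠ m ∧ l ≠ n := by simpa using hl
  have hmn := key hn hm 0
  by_cases hl0 : ρ.Gp 0 (u l) = 0
  · have hml := key hl0 hm 0
    have hprod : (2 * b + -1 - 2) * ((l : ℂ) - n) = 0 := by linear_combination hmn - hml
    rcases mul_eq_zero.1 hprod with hb | hb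
    · exact h.two_mul_add_ne hρ (by linear_combination hb)
    · exact hln (by exact_mod_cast sub_eq_zero.1 hb)
  · have hnl := key hn hl0 0
    have hprod : (2 * b - -1 - 2) * ((l : ℂ) - m) = 0 := by linear_combination hnl - hmn
    rcases mul_eq_zero.1 hprod with hb | hb
    · exact h.two_mul_sub_ne hρ (by linear_combination hb)
    · exact hlm (by exact_mod_cast sub_eq_zero.1 hb)

theorem Gm_ne_zero (hρ : ρ.IsSimpleOfLengthTwo) (n : ℤ) : ρ.Gm 0 (u n) ≠ 0 :=
  h.flip.Gp_ne_zero hρ.flip n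

theorem smul_ne_Gp_Gm (hρ : ρ.IsSimpleOfLengthTwo) (n : ℤ) (x : ℂ) :
    x • u n ≠ ρ.Gp 0 (ρ.Gm 0 (u n)) := by
  intro hx
  have key (r : ℤ) : (2 * b - c - 2) * r = x := by
    have hr := congrArg (ρ.Gp r) hx.symm
    rw [h.Gp_Gp_Gm, map_smul, h.Gp_apply r n] at hr
    exact smul_left_injective ℂ (h.Gp_ne_zero hρ (r + n)) hr
  have key0 := key 0
  have key1 := key 1
  push_cast at key0 key1
  exact h.two_mul_sub_ne hρ (by linear_combination key1 - key0)

theorem smul_Gp_ne_Gm (hρ : ρ.IsSimpleOfLengthTwo) (n : ℤ) (x : ℂ) :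
    x • ρ.Gp 0 (u n) ≠ ρ.Gm 0 (u n) := by
  intro hx
  have hH := congrArg (ρ.H 0) hx
  rw [map_smul, h.H_Gp, h.H_Gm, zero_add, smul_comm, hx] at hH
  have := smul_left_injective ℂ (h.Gm_ne_zero hρ n) hH
  norm_num [sub_eq_add_neg, CharZero.eq_neg_self_iff] at this

theorem linearIndependent (hρ : ρ.IsSimpleOfLengthTwo) :
    LinearIndependent ℂ fun x : (Bool × Bool) × ℤ =>
      if x.1.1 then (if x.1.2 then ρ.Gm 0 (u x.2) else ρ.Gp 0 (u x.2))
      else (if x.1.2 then ρ.Gp 0 (ρ.Gm 0 (u x.2)) else u x.2) := by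
  let E (x : Bool × ℤ) : Submodule ℂ V := ρ.wt (a + x.2) ⊓ ρ.parity (if x.1 then τ + 1 else τ)
  have hE : iSupIndep E := by
    refine (iSupIndep_inf (Module.End.eigenspaces_iSupIndep (ρ.L 0)) ρ.iSupIndep_parity).comp
      (f := fun x : Bool × ℤ => (a + x.2, if x.1 then τ + 1 else τ)) ?_
    rintro ⟨_ | _, i⟩ ⟨_ | _, j⟩ hij <;> simp_all
  have hli := linearIndependent_prod_of_iSupIndep hE
    (v := fun x (e : Bool) => if x.1 then (if e then ρ.Gm 0 (u x.2) else ρ.Gp 0 (u x.2))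
      else (if e then ρ.Gp 0 (ρ.Gm 0 (u x.2)) else u x.2)) ?_ ?_
  · exact hli.comp (fun x : (Bool × Bool) × ℤ => (x.1.2, x.1.1, x.2))
      (by rintro ⟨⟨_, _⟩, _⟩ ⟨⟨_, _⟩, _⟩ hxy; simp_all)
  · rintro ⟨_ | _, i⟩ (_ | _)
    exacts [h.mem i, h.Gp_Gm_mem i, h.Gp_mem i, h.Gm_mem i]
  · rintro ⟨_ | _, i⟩
    · exact linearIndependent_ite_bool (h.ne_zero i) (h.smul_ne_Gp_Gm hρ i)
    · exact linearIndependent_ite_bool (h.Gp_ne_zero hρ i) (h.smul_Gp_ne_Gm hρ i)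

end IsDensityFamily

/-- The same operators with the homogeneous components relabelled so that parity `τ` becomes the
even part. -/
def regrade (ρ : RamondRep V) (τ : ZMod 2) : RamondRep V :=
  { ρ with
    even := ρ.parity τ
    odd := ρ.parity (τ + 1)
    grading := ρ.isCompl_parity τ
    L_even := fun _ _ => L_mem_parity
    L_odd := fun _ _ => L_mem_parity
    H_even := fun _ _ => H_mem_parity
    H_odd := fun _ _ => H_mem_parity
    Gp_even := fun _ _ => Gp_mem_parity
    Gp_odd := fun _ _ hv => by
      simpa only [add_assoc, CharTwo.add_self_eq_zero, add_zero] using Gp_mem_parity hv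
    Gm_even := fun _ _ => Gm_mem_parity
    Gm_odd := fun _ _ hv => by
      simpa only [add_assoc, CharTwo.add_self_eq_zero, add_zero] using Gm_mem_parity hv }

theorem IsDensityFamily.isRabc_regrade {a b c : ℂ} {τ : ZMod 2} {u : ℤ → V}
    (h : ρ.IsDensityFamily a b c τ u) (hρ : ρ.IsSimpleOfLengthTwo) :
    (ρ.regrade τ).IsRabc u (ρ.Gp 0 ∘ ρ.Gm 0 ∘ u) (ρ.Gp 0 ∘ u) (ρ.Gm 0 ∘ u) a b c := by
  have heven : span ℂ (Set.range u ∪ Set.range (ρ.Gp 0 ∘ ρ.Gm 0 ∘ u)) ≤ ρ.parity τ :=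
    span_le.2 (Set.union_subset (Set.range_subset_iff.2 h.mem_parity)
      (Set.range_subset_iff.2 fun i => (h.Gp_Gm_mem i).2))
  have hodd : span ℂ (Set.range (ρ.Gp 0 ∘ u) ∪ Set.range (ρ.Gm 0 ∘ u)) ≤ ρ.parity (τ + 1) :=
    span_le.2 (Set.union_subset (Set.range_subset_iff.2 fun i => (h.Gp_mem i).2)
      (Set.range_subset_iff.2 fun i => (h.Gm_mem i).2))
  have hspan := h.span_eq_top hρ.isSimple
  have hsup := hspan
  rw [Set.union_assoc, span_union] at hsup
  exact ⟨h.c₀_eq_zero, h.linearIndependent hρ, hspan,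
    eq_of_isCompl_of_sup_eq_top (ρ.isCompl_parity τ) heven hodd hsup,
    eq_of_isCompl_of_sup_eq_top (ρ.isCompl_parity τ).symm hodd heven (sup_comm _ _ |>.trans hsup),
    h.L_apply, h.L_Gp, h.L_Gm, h.L_Gp_Gm, h.H_apply, h.H_Gp, h.H_Gm, h.H_Gp_Gm, h.Gp_apply,
    h.Gm_apply, h.Gp_Gp, h.Gm_Gm, h.Gp_Gm, h.Gm_Gp, h.Gm_Gp_Gm, h.Gp_Gp_Gm⟩

end RamondRep

/-! ### Vanishing of the central charge -/

section Heisenberg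

variable {K V : Type*} [Field K] [AddCommGroup V] [Module K V] {P Q : Module.End K V} {κ x : K}
  {z : V}

theorem mul_apply_pow_apply_of_commutator (hPQ : P * Q - Q * P = κ • 1) (hz : (P * Q) z = x • z)
    (j : ℕ) : (P * Q) ((P ^ j) z) = (x - j * κ) • (P ^ j) z := by
  induction j with
  | zero => simpa using hz
  | succ j ih =>
    have hQP : Q * P = P * Q - κ • 1 := by rw [← hPQ, sub_sub_cancel]
    calc (P * Q) ((P ^ (j + 1)) z) = P ((Q * P) ((P ^ j) z)) := by rw [pow_succ']; rfl
      _ = P ((x - j * κ) • (P ^ j) z - κ • (P ^ j) z) := by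
        rw [hQP, LinearMap.sub_apply, ih, LinearMap.smul_apply, Module.End.one_apply]
      _ = (x - (j + 1 : ℕ) * κ) • (P ^ (j + 1)) z := by
        rw [← sub_smul, map_smul, pow_succ', Module.End.mul_apply, Nat.cast_succ, add_one_mul,
          sub_sub]

theorem pow_apply_ne_zero_of_commutator (hPQ : P * Q - Q * P = κ • 1)
    (hx : ∀ n : ℕ, x ≠ (n + 1) * κ) (hz0 : z ≠ 0) (hz : (P * Q) z = x • z) (j : ℕ) :
    (P ^ j) z ≠ 0 := by
  induction j with
  | zero => simpa using hz0
  | succ j ih =>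
    intro h0
    have h1 : (P * Q) ((P ^ j) z) - Q ((P ^ (j + 1)) z) = κ • (P ^ j) z := by
      rw [pow_succ']
      exact LinearMap.congr_fun hPQ ((P ^ j) z)
    rw [h0, map_zero, sub_zero, mul_apply_pow_apply_of_commutator hPQ hz] at h1
    exact hx j (by linear_combination smul_left_injective K ih h1)

/- `P` can annihilate a vector of the chain only if `x = (n + 1) κ`, and `Q` only if `x = -n κ`, so
the eigenvalue decides which ladder operator never does. -/
theorem exists_ladder_operator [CharZero K] (hκ : κ ≠ 0) (hPQ : P * Q - Q * P = κ • 1) (x : K) :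
    ∃ R δ, (R = P ∨ R = Q) ∧ δ ≠ 0 ∧ ∀ z, z ≠ 0 → (P * Q) z = x • z → ∀ j : ℕ,
      (R ^ j) z ≠ 0 ∧ (P * Q) ((R ^ j) z) = (x + j * δ) • (R ^ j) z := by
  by_cases hx : ∀ n : ℕ, x ≠ (n + 1) * κ
  · refine ⟨P, -κ, .inl rfl, neg_ne_zero.2 hκ, fun z hz0 hz j =>
      ⟨pow_apply_ne_zero_of_commutator hPQ hx hz0 hz j, ?_⟩⟩
    rw [mul_apply_pow_apply_of_commutator hPQ hz, mul_neg, sub_eq_add_neg]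
  · obtain ⟨n, hn⟩ : ∃ n : ℕ, x = (n + 1) * κ := by push Not at hx; exact hx
    have hQP : Q * P - P * Q = (-κ) • 1 := by rw [neg_smul, ← hPQ, neg_sub]
    have hPQ' : P * Q = Q * P + κ • 1 := by rw [← hPQ, add_sub_cancel]
    refine ⟨Q, κ, .inr rfl, hκ, fun z hz0 hz j => ?_⟩
    have hz' : (Q * P) z = (x - κ) • z := by
      rw [hPQ', LinearMap.add_apply] at hz
      rw [sub_smul, ← hz, LinearMap.smul_apply, Module.End.one_apply, add_sub_cancel_right]
    refine ⟨pow_apply_ne_zero_of_commutator hQP (fun m hm => ?_) hz0 hz' j, ?_⟩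
    · have hsum : ((n + m + 1 : ℕ) : K) * κ = 0 := by push_cast; linear_combination hm - hn
      exact mul_ne_zero (Nat.cast_ne_zero.2 (Nat.succ_ne_zero _)) hκ hsum
    · rw [hPQ', LinearMap.add_apply, mul_apply_pow_apply_of_commutator hQP hz',
        LinearMap.smul_apply, Module.End.one_apply]
      module

end Heisenberg

namespace RamondRep

variable {V : Type} [AddCommGroup V] [Module ℂ V] {ρ : RamondRep V} {μ : ℂ} {τ : ZMod 2} {v : V}

theorem commute_H {m n : ℤ} (hmn : m + n ≠ 0) : Commute (ρ.H m) (ρ.H n) :=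
  LinearMap.ext fun v => by simpa [hmn, sub_eq_zero] using ρ.rel_HH m n v

theorem H_mul_H_neg_sub (ρ : RamondRep V) (m : ℤ) :
    ρ.H m * ρ.H (-m) - ρ.H (-m) * ρ.H m = (1 / 3 * m * ρ.c₀) • 1 :=
  LinearMap.ext fun v => by simpa using ρ.rel_HH m (-m) v

theorem H_pow_mem_wt_inf_parity (m : ℤ) (j : ℕ) (hv : v ∈ ρ.wt μ ⊓ ρ.parity τ) :
    (ρ.H m ^ j) v ∈ ρ.wt (μ + (m * j : ℤ)) ⊓ ρ.parity τ := by
  induction j with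
  | zero => simpa using hv
  | succ j ih =>
    rw [pow_succ', Nat.cast_succ, mul_add_one, Int.cast_add, ← add_assoc]
    exact ⟨H_mem_wt ih.1, H_mem_parity ih.2⟩

theorem exists_H_ladder (hc : ρ.c₀ ≠ 0) {m : ℤ} (hm : m ≠ 0) (x : ℂ) :
    ∃ (r : ℤ) (δ : ℂ), (r = m ∨ r = -m) ∧ δ ≠ 0 ∧ ∀ z, z ≠ 0 → (ρ.H m * ρ.H (-m)) z = x • z →
      ∀ j : ℕ, (ρ.H r ^ j) z ≠ 0 ∧
        (ρ.H m * ρ.H (-m)) ((ρ.H r ^ j) z) = (x + j * δ) • (ρ.H r ^ j) z := by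
  have hκ : 1 / 3 * m * ρ.c₀ ≠ 0 :=
    mul_ne_zero (mul_ne_zero (by norm_num) (Int.cast_ne_zero.2 hm)) hc
  obtain ⟨R, δ, rfl | rfl, hR⟩ := exists_ladder_operator hκ (ρ.H_mul_H_neg_sub m) x
  exacts [⟨m, δ, .inl rfl, hR⟩, ⟨-m, δ, .inr rfl, hR⟩]

theorem exists_common_eigenvector_H_mul_H_neg [FiniteDimensional ℂ ↥(ρ.wt μ ⊓ ρ.parity τ)]
    (hne : ρ.wt μ ⊓ ρ.parity τ ≠ ⊥) {m n : ℤ} (hadd : m + n ≠ 0) (hsub : m ≠ n) :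
    ∃ z ∈ ρ.wt μ ⊓ ρ.parity τ, z ≠ 0 ∧ (∃ x : ℂ, (ρ.H m * ρ.H (-m)) z = x • z) ∧
      ∃ x : ℂ, (ρ.H n * ρ.H (-n)) z = x • z := by
  have hmem (k : ℤ) : ∀ v ∈ ρ.wt μ ⊓ ρ.parity τ,
      (ρ.H k * ρ.H (-k)) v ∈ ρ.wt μ ⊓ ρ.parity τ := fun v hv => by
    refine ⟨?_, H_mem_parity (H_mem_parity hv.2)⟩
    have := H_mem_wt (m := k) (H_mem_wt (m := -k) hv.1)
    rwa [Int.cast_neg, neg_add_cancel_right] at this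
  obtain ⟨x, w, hw, hw0, hwx⟩ := exists_eigenvector_mem hne (ρ.H m * ρ.H (-m)) (hmem m)
  have hcomm : Commute (ρ.H m * ρ.H (-m)) (ρ.H n * ρ.H (-n)) := by
    refine .mul_left (.mul_right ?_ ?_) (.mul_right ?_ ?_) <;> exact commute_H (by lia)
  have := Submodule.finiteDimensional_inf_left (ρ.wt μ ⊓ ρ.parity τ)
    (Module.End.eigenspace (ρ.H m * ρ.H (-m)) x)
  let S := ρ.wt μ ⊓ ρ.parity τ ⊓ Module.End.eigenspace (ρ.H m * ρ.H (-m)) x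
  have hS : ∀ v ∈ S, (ρ.H n * ρ.H (-n)) v ∈ S := fun v hv =>
    ⟨hmem n v hv.1, Module.End.mapsTo_genEigenspace_of_comm hcomm x 1 hv.2⟩
  have hSne : S ≠ ⊥ :=
    (Submodule.ne_bot_iff _).2 ⟨w, ⟨hw, Module.End.mem_eigenspace_iff.2 hwx⟩, hw0⟩
  obtain ⟨y, z, hz, hz0, hzy⟩ := exists_eigenvector_mem hSne (ρ.H n * ρ.H (-n)) hS
  exact ⟨z, hz.1, hz0, ⟨x, Module.End.mem_eigenspace_iff.1 hz.2⟩, y, hzy⟩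

/- If `c₀ ≠ 0`, the Heisenberg pairs `(H₁, H₋₁)` and `(H₂, H₋₂)` produce three vectors of equal
weight with distinct eigenvalues under `H₁H₋₁`. -/
theorem IsSimpleOfLengthTwo.c₀_eq_zero (h : ρ.IsSimpleOfLengthTwo) : ρ.c₀ = 0 := by
  by_contra hc
  obtain ⟨μ, τ, hr⟩ := h.exists_rank_eq
  have hne : ρ.wt μ ⊓ ρ.parity τ ≠ ⊥ := fun h0 => by
    rw [h0] at hr
    simp at hr
  have := h.finiteDimensional_wt_inf_parity μ τ
  obtain ⟨z, hz, hz0, ⟨x, hx⟩, x', hx'⟩ :=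
    exists_common_eigenvector_H_mul_H_neg hne (m := 1) (n := 2) (by decide) (by decide)
  obtain ⟨r, δ, hr, hδ, hR⟩ := exists_H_ladder hc one_ne_zero x
  obtain ⟨r', δ', hr', -, hR'⟩ := exists_H_ladder hc two_ne_zero x'
  obtain ⟨k, w, hw⟩ : ∃ (k : Fin 3 → ℕ) (w : ℤ), ∀ j, r' * k j + r * (2 * j : ℕ) = w := by
    rcases eq_or_ne r' (2 * r) with rfl | hne
    · exact ⟨fun j => 2 - j, 4 * r, fun j => by fin_cases j <;> simp <;> ring⟩
    · obtain rfl : r' = -(2 * r) := by lia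
      exact ⟨fun j => j, 0, fun j => by push_cast; ring⟩
  let y (j : Fin 3) : V := (ρ.H r ^ (2 * j : ℕ)) ((ρ.H r' ^ k j) z)
  have hcomm : Commute (ρ.H 1 * ρ.H (-1)) (ρ.H r') :=
    (commute_H (by lia)).mul_left (commute_H (by lia))
  have hxk (j : Fin 3) : (ρ.H 1 * ρ.H (-1)) ((ρ.H r' ^ k j) z) = x • (ρ.H r' ^ k j) z := by
    rw [← Module.End.mul_apply, (hcomm.pow_right (k j)).eq, Module.End.mul_apply, hx, map_smul]
  have hy (j : Fin 3) := hR _ (hR' z hz0 hx' (k j)).1 (hxk j) (2 * j)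
  have hinj : Function.Injective fun j : Fin 3 => x + (2 * j : ℕ) * δ := fun i j hij => by
    have : 2 * (i : ℕ) = 2 * j := by exact_mod_cast mul_right_cancel₀ hδ (add_left_cancel hij)
    lia
  have hli := Module.End.eigenvectors_linearIndependent' _ _ hinj y fun j =>
    ⟨Module.End.mem_eigenspace_iff.2 (hy j).2, (hy j).1⟩
  have hmem (j : Fin 3) : y j ∈ ρ.wt (μ + w) ⊓ ρ.parity τ := by
    rw [← hw j, Int.cast_add, ← add_assoc]
    exact H_pow_mem_wt_inf_parity r _ (H_pow_mem_wt_inf_parity r' (k j) hz)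
  have := card_le_of_linearIndependent_of_rank_le (d := 2) (h.rank_le (μ + w) τ) hli hmem
  simp at this

end RamondRep

/-! ### The top row -/

namespace RamondRep

variable {V : Type} [AddCommGroup V] [Module ℂ V] {ρ : RamondRep V} {a c : ℂ} {τ : ZMod 2}
  {i k : ℤ}

theorem jointWt_add_ne_bot_or_sub_ne_bot (hck : c + k ≠ 0) (hi : ρ.jointWt a c τ i k ≠ ⊥) {n : ℤ}
    (hn : n ≠ 0) : ρ.jointWt a c τ (i + n) k ≠ ⊥ ∨ ρ.jointWt a c τ (i - n) k ≠ ⊥ := by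
  by_contra! hcon
  obtain ⟨v, hv, hv0⟩ := exists_mem_ne_zero_of_ne_bot hi
  have hL : ρ.L n v = 0 := (Submodule.eq_bot_iff _).1 hcon.1 _ (L_mem_jointWt hv)
  have hH : ρ.H (-n) v = 0 := (Submodule.eq_bot_iff _).1 hcon.2 _ (H_mem_jointWt hv)
  have h := ρ.rel_LH n (-n) v
  rw [hL, hH, map_zero, map_zero, sub_zero, add_neg_cancel, mem_charge.1 (mem_jointWt.1 hv).2.1,
    smul_smul] at h
  exact smul_ne_zero (mul_ne_zero (Int.cast_ne_zero.2 (neg_ne_zero.2 hn)) hck) hv0 h.symm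

theorem isTrivialRep_of_G_eq_zero (hc : ρ.c₀ = 0) (hGp : ∀ m v, ρ.Gp m v = 0)
    (hGm : ∀ m v, ρ.Gm m v = 0) : ρ.IsTrivialRep := by
  have hrel (p q : ℤ) (v : V) :
      (-2 : ℂ) • ρ.L (p + q) v + ((p : ℂ) - q) • ρ.H (p + q) v = 0 := by
    simpa [hGp, hGm, hc] using (ρ.rel_GpGm p q v).symm
  have hH (m : ℤ) (v : V) : ρ.H m v = 0 := by
    have h₁ := hrel (m + 1) (-1) v
    have h₀ := hrel m 0 v
    rw [add_neg_cancel_right] at h₁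
    rw [add_zero] at h₀
    refine (smul_eq_zero.1 (?_ : (2 : ℂ) • ρ.H m v = 0)).resolve_left two_ne_zero
    rw [← sub_eq_zero.2 (h₁.trans h₀.symm)]
    push_cast
    module
  have hL (m : ℤ) (v : V) : ρ.L m v = 0 := by simpa [hH] using hrel m 0 v
  exact fun m v => ⟨hL m v, hH m v, hGp m v, hGm m v⟩

theorem IsSimple.exists_jointWt_ne_bot_of_ne (h : ρ.IsSimple) (hc : ρ.c₀ = 0)
    (hi : ρ.jointWt a c τ i k ≠ ⊥) : ∃ j l, l ≠ k ∧ ρ.jointWt a c τ j l ≠ ⊥ := by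
  by_contra! hbot
  have hzero {f : Module.End ℂ V}
      (hf : ∀ j, ∀ v ∈ ρ.jointWt a c τ j k, ∃ l ≠ k, ∃ j', f v ∈ ρ.jointWt a c τ j' l) (v : V) :
      f v = 0 := by
    have htop := (isJointWtSubmod_jointWt ρ a c τ).iSup_eq_top h hi
    suffices ⊤ ≤ LinearMap.ker f from this (mem_top (x := v))
    refine htop.symm.trans_le (iSup_le fun x w hw => ?_)
    obtain hx | hx := eq_or_ne x.2 k
    · rw [hx] at hw
      obtain ⟨l, hl, j', hfw⟩ := hf _ w hw
      exact (Submodule.eq_bot_iff _).1 (hbot j' l hl) _ hfw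
    · rw [hbot _ _ hx, mem_bot] at hw
      rw [hw]
      exact zero_mem _
  refine h.1 (isTrivialRep_of_G_eq_zero hc (fun m => hzero fun j v hv => ?_)
    fun m => hzero fun j v hv => ?_)
  · exact ⟨k + 1, by lia, _, Gp_mem_jointWt hv⟩
  · exact ⟨k - 1, by lia, _, Gm_mem_jointWt hv⟩

/-- Row `0` is the highest nonzero row of the joint weight decomposition, and its charge `c` is
nonzero. -/
structure IsTopRow (ρ : RamondRep V) (a c : ℂ) (τ : ZMod 2) : Prop where
  eq_bot (i k : ℤ) : 0 < k → ρ.jointWt a c τ i k = ⊥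
  exists_ne_bot : ∃ i, ρ.jointWt a c τ i 0 ≠ ⊥
  charge_ne_zero : c ≠ 0

theorem isTopRow_of_max (hk : ∃ i, ρ.jointWt a c τ i k ≠ ⊥)
    (hmax : ∀ l, (∃ i, ρ.jointWt a c τ i l ≠ ⊥) → l ≤ k) (hck : c + k ≠ 0) :
    ρ.IsTopRow a (c + k) (τ + k) where
  eq_bot i l hl := by
    rw [jointWt_add_charge]
    by_contra hne
    have := hmax (k + l) ⟨i, hne⟩
    lia
  exists_ne_bot := by simpa only [jointWt_add_charge, add_zero] using hk
  charge_ne_zero := hck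

namespace IsSimpleOfLengthTwo

theorem card_le_four_of_jointWt_ne_bot (h : ρ.IsSimpleOfLengthTwo) {T : Finset ℤ}
    (hT : ∀ k ∈ T, ρ.jointWt a c τ i k ≠ ⊥) : T.card ≤ 4 := by
  have hfiber (σ : ZMod 2) : (T.filter fun k : ℤ => τ + k = σ).card ≤ 2 := by
    set T' := T.filter fun k : ℤ => τ + k = σ
    choose v hv hv0 using fun k : T' =>
      exists_mem_ne_zero_of_ne_bot (hT k (Finset.mem_filter.1 k.2).1)
    have hli : LinearIndependent ℂ v :=
      Module.End.eigenvectors_linearIndependent' (ρ.H 0) (fun k : T' => c + (k : ℤ))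
        (fun k l hkl => Subtype.ext (Int.cast_injective (add_left_cancel hkl))) v
        fun k => ⟨(mem_jointWt.1 (hv k)).2.1, hv0 k⟩
    have hmem (k : T') : v k ∈ ρ.wt (a + i) ⊓ ρ.parity σ := by
      rw [← (Finset.mem_filter.1 k.2).2]
      exact ⟨(mem_jointWt.1 (hv k)).1, (mem_jointWt.1 (hv k)).2.2⟩
    simpa using card_le_of_linearIndependent_of_rank_le (h.rank_le (a + i) σ) hli hmem
  have hcard := Finset.card_le_mul_card_image_of_maps_to (s := T)
    (f := fun k : ℤ => τ + (k : ZMod 2)) (t := Finset.univ) (fun _ _ => Finset.mem_univ _) 2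
    fun σ _ => hfiber σ
  simpa [ZMod.card] using hcard

theorem finite_setOf_jointWt_ne_bot (h : ρ.IsSimpleOfLengthTwo) (a c : ℂ) (τ : ZMod 2) :
    {k : ℤ | ∃ i, ρ.jointWt a c τ i k ≠ ⊥}.Finite := by
  by_contra hinf
  have hsub : {k : ℤ | c + k = 0}.Subsingleton := fun k hk l hl =>
    Int.cast_injective (α := ℂ) (add_left_cancel (hk.trans hl.symm))
  obtain ⟨K, hK, hcard⟩ := (Set.Infinite.sdiff hinf hsub.finite).exists_subset_card_eq 9
  have : K.card ≤ 2 * 4 := card_le_two_mul_of_twoSided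
    (S := fun k => {i | ρ.jointWt a c τ i k ≠ ⊥})
    (fun k hk => (hK hk).1.imp fun i hi n hn =>
      jointWt_add_ne_bot_or_sub_ne_bot (hK hk).2 hi hn.ne')
    fun j T hT => h.card_le_four_of_jointWt_ne_bot hT
  lia

theorem exists_jointWt_ne_bot (h : ρ.IsSimpleOfLengthTwo) :
    ∃ a c τ, ρ.jointWt a c τ 0 0 ≠ ⊥ := by
  obtain ⟨μ, τ, hr⟩ := h.exists_rank_eq
  have := h.finiteDimensional_wt_inf_parity μ τ
  have hne : ρ.wt μ ⊓ ρ.parity τ ≠ ⊥ := fun h0 => by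
    rw [h0] at hr
    simp at hr
  obtain ⟨χ, v, hv, hv0, hχ⟩ := exists_eigenvector_mem hne (ρ.H 0) fun v hv =>
    ⟨by simpa using H_mem_wt (m := 0) hv.1, H_mem_parity hv.2⟩
  refine ⟨μ, χ, τ, (Submodule.ne_bot_iff _).2 ⟨v, mem_jointWt.2 ?_, hv0⟩⟩
  simpa using ⟨hv.1, mem_charge.2 hχ, hv.2⟩

theorem exists_isTopRow (h : ρ.IsSimpleOfLengthTwo) :
    ∃ a c τ, ρ.IsTopRow a c τ ∨ ρ.flip.IsTopRow a c τ := by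
  obtain ⟨a, c, τ, h0⟩ := h.exists_jointWt_ne_bot
  have hfin := h.finite_setOf_jointWt_ne_bot a c τ
  obtain ⟨K, hK, hmax⟩ := Set.exists_max_image _ id hfin ⟨0, 0, h0⟩
  obtain ⟨K', hK', hmin⟩ := Set.exists_min_image _ id hfin ⟨0, 0, h0⟩
  by_cases hcK : c + K = 0
  · refine ⟨a, -c + (-K' : ℤ), τ + (-K' : ℤ), .inr (isTopRow_of_max ?_ (fun l hl => ?_) ?_)⟩
    · simpa only [jointWt_flip, neg_neg, Set.mem_ofPred_eq] using hK'
    · simp only [jointWt_flip] at hl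
      have := hmin (-l) hl
      simp only [id] at this
      lia
    · intro hcK'
      have hKK' : K' = K := Int.cast_injective (α := ℂ) <| by
        push_cast at hcK'
        linear_combination -hcK' - hcK
      obtain ⟨i, hi⟩ := hK
      obtain ⟨j, l, hl, hjl⟩ := h.isSimple.exists_jointWt_ne_bot_of_ne h.c₀_eq_zero hi
      exact hl ((hmax l ⟨j, hjl⟩).antisymm (hKK'.ge.trans (hmin l ⟨j, hjl⟩)))
  · exact ⟨a, c + K, τ + K, .inl (isTopRow_of_max hK hmax hcK)⟩

end IsSimpleOfLengthTwo

end RamondRep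

namespace RamondRep

variable {V : Type} [AddCommGroup V] [Module ℂ V] {ρ : RamondRep V} {a c : ℂ} {τ : ZMod 2}

/-- A submodule, under the operators `L` and `H`, of row `0` of the joint weight decomposition,
presented by its weight components. -/
structure IsRowSubmod (ρ : RamondRep V) (a c : ℂ) (τ : ZMod 2) (N : ℤ → Submodule ℂ V) :
    Prop where
  le i : N i ≤ ρ.jointWt a c τ i 0
  L_mem m {i : ℤ} {v : V} : v ∈ N i → ρ.L m v ∈ N (i + m)
  H_mem m {i : ℤ} {v : V} : v ∈ N i → ρ.H m v ∈ N (i + m)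

/-- Row `-n` of the submodule coinduced from `N`: the vectors which every product of `n` operators
`Gₚ⁺` sends into `N`. -/
def coinduced (ρ : RamondRep V) (a c : ℂ) (τ : ZMod 2) (N : ℤ → Submodule ℂ V) :
    ℕ → ℤ → Submodule ℂ V
  | 0, i => N i
  | n + 1, i => ρ.jointWt a c τ i (-(n + 1 : ℕ)) ⊓
      ⨅ p, (coinduced ρ a c τ N n (i + p)).comap (ρ.Gp p)

/-- The submodule coinduced from `N`, as a family indexed by all rows. -/
def coinducedFamily (ρ : RamondRep V) (a c : ℂ) (τ : ZMod 2) (N : ℤ → Submodule ℂ V) (i k : ℤ) :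
    Submodule ℂ V :=
  if 0 < k then ⊥ else ρ.coinduced a c τ N (-k).toNat i

theorem Gp_Gm_add_Gm_Gp (hc : ρ.c₀ = 0) (p q : ℤ) (v : V) :
    ρ.Gp p (ρ.Gm q v) + ρ.Gm q (ρ.Gp p v) =
      (-2 : ℂ) • ρ.L (p + q) v + ((p : ℂ) - q) • ρ.H (p + q) v := by
  rw [ρ.rel_GpGm, hc, mul_zero, zero_smul, add_zero]

variable {N : ℤ → Submodule ℂ V} {n : ℕ} {m i k : ℤ} {v : V}

theorem mem_coinduced_succ : v ∈ ρ.coinduced a c τ N (n + 1) i ↔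
    v ∈ ρ.jointWt a c τ i (-(n + 1 : ℕ)) ∧ ∀ p, ρ.Gp p v ∈ ρ.coinduced a c τ N n (i + p) := by
  simp only [coinduced, mem_inf, mem_iInf, mem_comap]

theorem coinducedFamily_neg_natCast :
    ρ.coinducedFamily a c τ N i (-n) = ρ.coinduced a c τ N n i := by
  simp [coinducedFamily]

theorem coinducedFamily_of_pos (hk : 0 < k) : ρ.coinducedFamily a c τ N i k = ⊥ :=
  if_pos hk

theorem eq_neg_natCast_of_not_pos (hk : ¬0 < k) : ∃ n : ℕ, k = -n :=
  ⟨(-k).toNat, by lia⟩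

theorem IsTopRow.Gp_eq_zero (h : ρ.IsTopRow a c τ) (hv : v ∈ ρ.jointWt a c τ i 0) (p : ℤ) :
    ρ.Gp p v = 0 :=
  (Submodule.eq_bot_iff _).1 (h.eq_bot _ _ (by norm_num)) _ (Gp_mem_jointWt hv)

theorem H_zero_apply_of_mem_jointWt_zero (hv : v ∈ ρ.jointWt a c τ i 0) : ρ.H 0 v = c • v := by
  simpa only [Int.cast_zero, add_zero] using mem_charge.1 (mem_jointWt.1 hv).2.1

namespace IsRowSubmod

variable (hN : ρ.IsRowSubmod a c τ N)

include hN

theorem coinduced_le : ρ.coinduced a c τ N n i ≤ ρ.jointWt a c τ i (-n) := by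
  cases n with
  | zero => simpa [coinduced] using hN.le i
  | succ n => exact inf_le_left

theorem L_mem_coinduced (m : ℤ) (hv : v ∈ ρ.coinduced a c τ N n i) :
    ρ.L m v ∈ ρ.coinduced a c τ N n (i + m) := by
  induction n generalizing i v m with
  | zero => exact hN.L_mem m hv
  | succ n ih =>
    rw [mem_coinduced_succ] at hv ⊢
    refine ⟨L_mem_jointWt hv.1, fun p => ?_⟩
    have hL := ih m (hv.2 p)
    have hGp := hv.2 (p + m)
    rw [add_right_comm] at hL
    rw [← add_assoc, add_right_comm] at hGp
    rw [← sub_sub_self (ρ.L m (ρ.Gp p v)) (ρ.Gp p (ρ.L m v)), ρ.rel_LGp]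
    exact sub_mem hL (smul_mem _ _ hGp)

theorem H_mem_coinduced (m : ℤ) (hv : v ∈ ρ.coinduced a c τ N n i) :
    ρ.H m v ∈ ρ.coinduced a c τ N n (i + m) := by
  induction n generalizing i v m with
  | zero => exact hN.H_mem m hv
  | succ n ih =>
    rw [mem_coinduced_succ] at hv ⊢
    refine ⟨H_mem_jointWt hv.1, fun p => ?_⟩
    have hH := ih m (hv.2 p)
    have hGp := hv.2 (m + p)
    rw [add_right_comm] at hH
    rw [← add_assoc] at hGp
    rw [← sub_sub_self (ρ.H m (ρ.Gp p v)) (ρ.Gp p (ρ.H m v)), ρ.rel_HGp]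
    exact sub_mem hH hGp

theorem Gp_Gm_mem_coinduced (hc : ρ.c₀ = 0) {p : ℤ} (hv : v ∈ ρ.coinduced a c τ N n i)
    (hGp : ρ.Gm m (ρ.Gp p v) ∈ ρ.coinduced a c τ N n (i + p + m)) :
    ρ.Gp p (ρ.Gm m v) ∈ ρ.coinduced a c τ N n (i + m + p) := by
  have hL := hN.L_mem_coinduced (p + m) hv
  have hH := hN.H_mem_coinduced (p + m) hv
  rw [eq_sub_of_add_eq (Gp_Gm_add_Gm_Gp hc p m v), add_right_comm i]
  rw [← add_assoc] at hL hH
  exact sub_mem (add_mem (smul_mem _ _ hL) (smul_mem _ _ hH)) hGp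

theorem Gm_mem_coinduced (hc : ρ.c₀ = 0) (h : ρ.IsTopRow a c τ) (m : ℤ)
    (hv : v ∈ ρ.coinduced a c τ N n i) : ρ.Gm m v ∈ ρ.coinduced a c τ N (n + 1) (i + m) := by
  have hmem (n : ℕ) {i : ℤ} {v : V} (hv : v ∈ ρ.coinduced a c τ N n i) :
      ρ.Gm m v ∈ ρ.jointWt a c τ (i + m) (-(n + 1 : ℕ)) := by
    have := Gm_mem_jointWt (m := m) (hN.coinduced_le hv)
    rwa [← neg_add', ← Nat.cast_succ] at this
  induction n generalizing i v with
  | zero =>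
    refine mem_coinduced_succ.2 ⟨hmem 0 hv, fun p => hN.Gp_Gm_mem_coinduced hc hv ?_⟩
    rw [h.Gp_eq_zero (hN.le i hv), map_zero]
    exact zero_mem _
  | succ n ih =>
    refine mem_coinduced_succ.2 ⟨hmem _ hv, fun p => hN.Gp_Gm_mem_coinduced hc hv ?_⟩
    exact ih ((mem_coinduced_succ.1 hv).2 p)

theorem isJointWtSubmod_coinducedFamily (hc : ρ.c₀ = 0) (h : ρ.IsTopRow a c τ) :
    ρ.IsJointWtSubmod a c τ (ρ.coinducedFamily a c τ N) := by
  have hzero {f : Module.End ℂ V} {i j k l : ℤ} {v : V} (hk : 0 < k)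
      (hv : v ∈ ρ.coinducedFamily a c τ N i k) : f v ∈ ρ.coinducedFamily a c τ N j l := by
    rw [coinducedFamily_of_pos hk, mem_bot] at hv
    rw [hv, map_zero]
    exact zero_mem _
  refine ⟨fun i k => ?_, fun m i k v hv => ?_, fun m i k v hv => ?_, fun m i k v hv => ?_,
    fun m i k v hv => ?_⟩
  all_goals
    by_cases hk : 0 < k
    · first
        | exact hzero hk hv
        | exact (coinducedFamily_of_pos hk).trans_le bot_le
    obtain ⟨n, rfl⟩ := eq_neg_natCast_of_not_pos hk
    try rw [coinducedFamily_neg_natCast] at hv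
  · rw [coinducedFamily_neg_natCast]
    exact hN.coinduced_le
  · rw [coinducedFamily_neg_natCast]
    exact hN.L_mem_coinduced m hv
  · rw [coinducedFamily_neg_natCast]
    exact hN.H_mem_coinduced m hv
  · cases n with
    | zero =>
      rw [h.Gp_eq_zero (hN.le i hv)]
      exact zero_mem _
    | succ n =>
      rw [Nat.cast_succ, neg_add, neg_add_cancel_right, coinducedFamily_neg_natCast]
      exact (mem_coinduced_succ.1 hv).2 m
  · rw [← neg_add', ← Nat.cast_succ, coinducedFamily_neg_natCast]
    exact hN.Gm_mem_coinduced hc h m hv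

end IsRowSubmod

namespace IsTopRow

variable (h : ρ.IsTopRow a c τ)

include h

theorem eq_bot_or_eq_jointWt (hρ : ρ.IsSimple) (hc : ρ.c₀ = 0) (hN : ρ.IsRowSubmod a c τ N) :
    (∀ i, N i = ⊥) ∨ ∀ i, N i = ρ.jointWt a c τ i 0 := by
  by_cases! hbot : ∀ i, N i = ⊥
  · exact .inl hbot
  · obtain ⟨j, hj⟩ := hbot
    exact .inr fun i =>
      (hN.isJointWtSubmod_coinducedFamily hc h).eq_jointWt hρ (i := j) (k := 0) hj i 0

theorem eq_zero_of_Gp_eq_zero (hρ : ρ.IsSimple) (hc : ρ.c₀ = 0) (hk : k < 0)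
    (hv : v ∈ ρ.jointWt a c τ i k) (hGp : ∀ p, ρ.Gp p v = 0) : v = 0 := by
  by_contra hv0
  have hN : ρ.IsRowSubmod a c τ fun _ => ⊥ := ⟨fun _ => bot_le, by simp, by simp⟩
  obtain ⟨n, rfl⟩ : ∃ n : ℕ, k = -(n + 1 : ℕ) := ⟨(-k - 1).toNat, by lia⟩
  have hmem : v ∈ ρ.coinducedFamily a c τ (fun _ => ⊥) i (-(n + 1 : ℕ)) := by
    rw [coinducedFamily_neg_natCast]
    exact mem_coinduced_succ.2 ⟨hv, fun p => hGp p ▸ zero_mem _⟩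
  obtain ⟨j, hj⟩ := h.exists_ne_bot
  exact hj ((hN.isJointWtSubmod_coinducedFamily hc h).eq_jointWt hρ
    ((Submodule.ne_bot_iff _).2 ⟨v, hmem, hv0⟩) j 0).symm

theorem H_H_apply (hρ : ρ.IsSimpleOfLengthTwo) (m n : ℤ) (hv : v ∈ ρ.jointWt a c τ i 0) :
    ρ.H m (ρ.H n v) = c • ρ.H (m + n) v := by
  have hc := hρ.c₀_eq_zero
  refine loop_mul_apply_of_simple (L := ρ.L) (M := fun i => ρ.jointWt a c τ i 0) (D := 2)
    (fun m n => LinearMap.ext fun v => ?_) (fun m n => LinearMap.ext fun v => ?_)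
    (fun _ _ => H_zero_apply_of_mem_jointWt_zero) h.charge_ne_zero
    (fun _ _ _ => L_mem_jointWt) (fun _ _ _ => H_mem_jointWt)
    (fun i => hρ.finiteDimensional_jointWt a c τ i 0)
    (fun i => Module.finrank_le_of_rank_le (hρ.rank_jointWt_le a c τ i 0)) h.exists_ne_bot
    (fun N hle hL hH => h.eq_bot_or_eq_jointWt hρ.isSimple hc
      ⟨hle, fun m i v => hL m i v, fun m i v => hH m i v⟩) m n hv
  · exact sub_eq_zero.1 ((ρ.rel_HH m n v).trans (by simp only [hc, mul_zero, zero_smul]))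
  · rw [add_comm n m]
    exact ρ.rel_LH m n v

end IsTopRow

end RamondRep

/-! ### Density families on the top row -/

namespace RamondRep

variable {V : Type} [AddCommGroup V] [Module ℂ V] {ρ : RamondRep V} {a b c : ℂ} {τ : ZMod 2}

/-- The shift operator `c⁻¹ Hⱼ`. On the top row these compose like the powers of one invertible
operator. -/
noncomputable def shift (ρ : RamondRep V) (c : ℂ) (j : ℤ) : Module.End ℂ V :=
  c⁻¹ • ρ.H j

/-- The operator `Lₘ`, shifted back to weight zero and normalised to vanish at `m = 0`. -/
noncomputable def twistedWitt (ρ : RamondRep V) (a c : ℂ) (m : ℤ) : Module.End ℂ V :=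
  ρ.shift c (-m) * ρ.L m - a • 1

variable {i j k : ℤ} {v v' : V}

theorem shift_mem_jointWt (hv : v ∈ ρ.jointWt a c τ i k) :
    ρ.shift c j v ∈ ρ.jointWt a c τ (i + j) k :=
  smul_mem _ _ (H_mem_jointWt hv)

theorem twistedWitt_apply (m : ℤ) (v : V) :
    ρ.twistedWitt a c m v = ρ.shift c (-m) (ρ.L m v) - a • v :=
  rfl

theorem twistedWitt_mem_jointWt (m : ℤ) (hv : v ∈ ρ.jointWt a c τ i k) :
    ρ.twistedWitt a c m v ∈ ρ.jointWt a c τ i k := by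
  have hL := shift_mem_jointWt (j := -m) (L_mem_jointWt (m := m) hv)
  rw [add_neg_cancel_right] at hL
  exact sub_mem hL (smul_mem _ _ hv)

theorem L_shift (m n : ℤ) (v : V) :
    ρ.L m (ρ.shift c n v) = ρ.shift c n (ρ.L m v) + (n : ℂ) • ρ.shift c (m + n) v := by
  simp only [shift, LinearMap.smul_apply, map_smul]
  rw [sub_eq_iff_eq_add.1 (ρ.rel_LH m n v)]
  module

namespace IsTopRow

variable (h : ρ.IsTopRow a c τ)
include h

theorem eq_of_Gp_eq (hρ : ρ.IsSimple) (hc : ρ.c₀ = 0) (hk : k < 0) (hv : v ∈ ρ.jointWt a c τ i k)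
    (hv' : v' ∈ ρ.jointWt a c τ i k) (hGp : ∀ p, ρ.Gp p v = ρ.Gp p v') : v = v' :=
  sub_eq_zero.1 <| h.eq_zero_of_Gp_eq_zero hρ hc hk (sub_mem hv hv') fun p => by
    rw [map_sub, hGp, sub_self]

theorem H_eq_smul_shift (j : ℤ) (v : V) : ρ.H j v = c • ρ.shift c j v := by
  rw [shift, LinearMap.smul_apply, smul_inv_smul₀ h.charge_ne_zero]

theorem shift_zero (hv : v ∈ ρ.jointWt a c τ i 0) : ρ.shift c 0 v = v := by
  rw [shift, LinearMap.smul_apply, H_zero_apply_of_mem_jointWt_zero hv,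
    inv_smul_smul₀ h.charge_ne_zero]

variable (hρ : ρ.IsSimpleOfLengthTwo)
include hρ

theorem shift_shift (m n : ℤ) (hv : v ∈ ρ.jointWt a c τ i 0) :
    ρ.shift c m (ρ.shift c n v) = ρ.shift c (m + n) v := by
  simp only [shift, LinearMap.smul_apply, map_smul]
  rw [h.H_H_apply hρ m n hv, inv_smul_smul₀ h.charge_ne_zero]

theorem shift_injOn (j : ℤ) : Set.InjOn (ρ.shift c j) (ρ.jointWt a c τ i 0) := by
  intro v hv v' hv' heq
  have := congrArg (ρ.shift c (-j)) heq
  rwa [h.shift_shift hρ _ _ hv, h.shift_shift hρ _ _ hv', neg_add_cancel, h.shift_zero hv,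
    h.shift_zero hv'] at this

theorem shift_ne_zero (j : ℤ) (hv : v ∈ ρ.jointWt a c τ i 0) (hv0 : v ≠ 0) :
    ρ.shift c j v ≠ 0 := fun h0 =>
  hv0 (h.shift_injOn hρ j hv (zero_mem _) (h0.trans (map_zero _).symm))

theorem L_eq_shift (m : ℤ) (hv : v ∈ ρ.jointWt a c τ i 0) :
    ρ.L m v = ρ.shift c m (ρ.twistedWitt a c m v + a • v) := by
  have hL := L_mem_jointWt (m := m) hv
  rw [twistedWitt_apply, sub_add_cancel, h.shift_shift hρ _ _ hL, add_neg_cancel, h.shift_zero hL]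

theorem L_shift_eq_shift (m n : ℤ) (hv : v ∈ ρ.jointWt a c τ i 0) :
    ρ.L m (ρ.shift c n v) = ρ.shift c (m + n) (ρ.twistedWitt a c m v + (a + n) • v) := by
  have hmem := add_mem (twistedWitt_mem_jointWt m hv) (smul_mem _ a hv)
  rw [L_shift, h.L_eq_shift hρ m hv, h.shift_shift hρ _ _ hmem, add_comm n m, ← map_smul,
    ← map_add, add_smul, add_assoc]

theorem jointWt_zero_ne_bot : ρ.jointWt a c τ 0 0 ≠ ⊥ := by
  obtain ⟨i, hi⟩ := h.exists_ne_bot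
  obtain ⟨v, hv, hv0⟩ := exists_mem_ne_zero_of_ne_bot hi
  have hmem := shift_mem_jointWt (j := -i) hv
  rw [add_neg_cancel] at hmem
  exact (Submodule.ne_bot_iff _).2 ⟨_, hmem, h.shift_ne_zero hρ _ hv hv0⟩

theorem twistedWitt_commutator (m n : ℤ) (hv : v ∈ ρ.jointWt a c τ i 0) :
    ρ.twistedWitt a c m (ρ.twistedWitt a c n v) - ρ.twistedWitt a c n (ρ.twistedWitt a c m v) =
      ((n : ℂ) - m) • ρ.twistedWitt a c (m + n) v - (n : ℂ) • ρ.twistedWitt a c n v +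
        (m : ℂ) • ρ.twistedWitt a c m v := by
  have hmem (n : ℤ) := twistedWitt_mem_jointWt n hv
  have hLL (m n : ℤ) : ρ.L m (ρ.L n v) = ρ.shift c (m + n)
      (ρ.twistedWitt a c m (ρ.twistedWitt a c n v + a • v) +
        (a + n) • (ρ.twistedWitt a c n v + a • v)) := by
    rw [h.L_eq_shift hρ n hv, h.L_shift_eq_shift hρ m n (add_mem (hmem n) (smul_mem _ a hv))]
  have hrel := ρ.rel_LL m n v
  rw [hρ.c₀_eq_zero, mul_zero, zero_smul, add_zero, hLL, hLL, add_comm n m,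
    h.L_eq_shift hρ (m + n) hv, ← map_sub, ← map_smul] at hrel
  have hLL_mem (m n : ℤ) : ρ.twistedWitt a c m (ρ.twistedWitt a c n v + a • v) +
      (a + n) • (ρ.twistedWitt a c n v + a • v) ∈ ρ.jointWt a c τ i 0 := by
    have := add_mem (hmem n) (smul_mem _ a hv)
    exact add_mem (twistedWitt_mem_jointWt m this) (smul_mem _ _ this)
  have heq := h.shift_injOn hρ (m + n) (sub_mem (hLL_mem m n) (hLL_mem n m))
    (smul_mem _ _ (add_mem (hmem (m + n)) (smul_mem _ a hv))) hrel
  simp only [map_add, map_smul] at heq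
  rw [← sub_eq_zero] at heq ⊢
  rw [← heq]
  module

theorem exists_twistedWitt_eigenvector :
    ∃ b : ℂ, ∃ v ∈ ρ.jointWt a c τ 0 0, v ≠ 0 ∧ ∀ m : ℤ, ρ.twistedWitt a c m v = (b * m) • v := by
  have := hρ.finiteDimensional_jointWt a c τ 0 0
  have := nontrivial_iff_ne_bot.2 (h.jointWt_zero_ne_bot hρ)
  let d (m : ℤ) : Module.End ℂ (ρ.jointWt a c τ 0 0) :=
    (ρ.twistedWitt a c m).restrict fun _ => twistedWitt_mem_jointWt m
  have hd : IsTwistedWittFamily d :=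
    ⟨fun v => Subtype.ext ?_, fun m n v => Subtype.ext (h.twistedWitt_commutator hρ m n v.2)⟩
  · obtain ⟨b, v, hv0, hv⟩ := hd.exists_common_eigenvector
    exact ⟨b, v, v.2, fun h0 => hv0 (Subtype.ext h0), fun m => congrArg Subtype.val (hv m)⟩
  · change ρ.twistedWitt a c 0 v = 0
    have hL : ρ.L 0 (v : V) = a • (v : V) := by simpa using mem_wt.1 (mem_jointWt.1 v.2).1
    rw [twistedWitt_apply, hL, map_smul, neg_zero, h.shift_zero v.2, sub_self]

end IsTopRow

/-- A family in the top row carrying the tensor density action of `L` and `H`. -/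
structure IsTopFamily (ρ : RamondRep V) (a b c : ℂ) (τ : ZMod 2) (w : ℤ → V) : Prop
    extends ρ.IsTopRow a c τ where
  mem i : w i ∈ ρ.jointWt a c τ i 0
  ne_zero i : w i ≠ 0
  L_apply (m i : ℤ) : ρ.L m (w i) = (a + i + b * m) • w (m + i)
  H_apply (m i : ℤ) : ρ.H m (w i) = c • w (m + i)

theorem IsTopRow.exists_isTopFamily (h : ρ.IsTopRow a c τ) (hρ : ρ.IsSimpleOfLengthTwo) :
    ∃ b w, ρ.IsTopFamily a b c τ w := by
  obtain ⟨b, x, hx, hx0, hd⟩ := h.exists_twistedWitt_eigenvector hρ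
  refine ⟨b, fun j => ρ.shift c j x, h, fun i => ?_, fun i => h.shift_ne_zero hρ i hx hx0,
    fun m i => ?_, fun m i => ?_⟩
  · simpa only [zero_add] using shift_mem_jointWt (j := i) hx
  · rw [h.L_shift_eq_shift hρ m i hx, hd, ← add_smul, map_smul, add_comm (b * m)]
  · rw [h.H_eq_smul_shift, h.shift_shift hρ m i hx]

/-- The family which `Gₚ⁺` sends to multiples of `w (p + j)`: it generates `R_{a,b,c}` when `w` is
its top row. -/
def lowered (ρ : RamondRep V) (w : ℤ → V) (j : ℤ) : V :=
  ρ.Gm 1 (w (j - 1)) - ρ.Gm 0 (w j)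

namespace IsTopFamily

variable {w : ℤ → V} (h : ρ.IsTopFamily a b c τ w)
include h

theorem Gm_mem (q j : ℤ) : ρ.Gm q (w (j - q)) ∈ ρ.jointWt a c τ j (-1) := by
  simpa only [sub_add_cancel, zero_sub] using Gm_mem_jointWt (m := q) (h.mem (j - q))

theorem Gm_zero_mem (j : ℤ) : ρ.Gm 0 (w j) ∈ ρ.jointWt a c τ j (-1) := by
  simpa only [sub_zero] using h.Gm_mem 0 j

theorem lowered_mem (j : ℤ) : ρ.lowered w j ∈ ρ.jointWt a c τ j (-1) :=
  sub_mem (h.Gm_mem 1 j) (h.Gm_zero_mem j)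

theorem mem_wt_inf_parity (j : ℤ) : w j ∈ ρ.wt (a + j) ⊓ ρ.parity τ := by
  have hmem := mem_jointWt.1 (h.mem j)
  rw [Int.cast_zero, Int.cast_zero, add_zero, add_zero] at hmem
  exact ⟨hmem.1, hmem.2.2⟩

theorem Gm_zero_mem_wt_inf_parity (j : ℤ) : ρ.Gm 0 (w j) ∈ ρ.wt (a + j) ⊓ ρ.parity (τ + 1) :=
  Gp_zero_mem_wt_inf_parity (ρ := ρ.flip) (h.mem_wt_inf_parity j)

section

variable (hc : ρ.c₀ = 0)
include hc

theorem Gp_Gm (p q j : ℤ) : ρ.Gp p (ρ.Gm q (w (j - q))) =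
    (-2 * (a + j) + (c - 2 * b) * p + (2 - 2 * b - c) * q) • w (p + j) := by
  have hrel := Gp_Gm_add_Gm_Gp hc p q (w (j - q))
  rw [h.Gp_eq_zero (h.mem _), map_zero, add_zero, h.L_apply, h.H_apply,
    show p + q + (j - q) = p + j by ring] at hrel
  rw [hrel]
  push_cast
  module

theorem Gp_Gm_zero (p j : ℤ) : ρ.Gp p (ρ.Gm 0 (w j)) =
    (-2 * (a + j) + (c - 2 * b) * p) • w (p + j) := by
  simpa using h.Gp_Gm hc p 0 j

theorem Gp_lowered (p j : ℤ) : ρ.Gp p (ρ.lowered w j) = (2 - 2 * b - c) • w (p + j) := by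
  rw [lowered, map_sub, h.Gp_Gm hc, h.Gp_Gm_zero hc]
  push_cast
  module

variable (hρ : ρ.IsSimple)
include hρ

theorem Gm_apply (q i : ℤ) :
    ρ.Gm q (w i) = ρ.Gm 0 (w (q + i)) + (q : ℂ) • ρ.lowered w (q + i) := by
  have hmem := h.Gm_mem q (q + i)
  have hGp (p : ℤ) := h.Gp_Gm hc p q (q + i)
  rw [add_sub_cancel_left] at hmem
  simp only [add_sub_cancel_left] at hGp
  refine h.eq_of_Gp_eq hρ hc (by norm_num) hmem
    (add_mem (h.Gm_zero_mem _) (smul_mem _ _ (h.lowered_mem _))) fun p => ?_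
  rw [hGp, map_add, map_smul, h.Gp_Gm_zero hc, h.Gp_lowered hc]
  module

theorem L_lowered (m j : ℤ) :
    ρ.L m (ρ.lowered w j) = (a + j + (b + 1 / 2) * m) • ρ.lowered w (m + j) := by
  refine h.eq_of_Gp_eq hρ hc (by norm_num) (add_comm m j ▸ L_mem_jointWt (h.lowered_mem j))
    (smul_mem _ _ (h.lowered_mem (m + j))) fun p => ?_
  rw [← sub_sub_self (ρ.L m (ρ.Gp p (ρ.lowered w j))) (ρ.Gp p _), ρ.rel_LGp, map_smul]
  simp only [h.Gp_lowered hc, map_smul, h.L_apply, add_assoc, add_left_comm m p]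
  push_cast
  module

theorem H_lowered (m j : ℤ) : ρ.H m (ρ.lowered w j) = (c - 1) • ρ.lowered w (m + j) := by
  refine h.eq_of_Gp_eq hρ hc (by norm_num) (add_comm m j ▸ H_mem_jointWt (h.lowered_mem j))
    (smul_mem _ _ (h.lowered_mem (m + j))) fun p => ?_
  rw [← sub_sub_self (ρ.H m (ρ.Gp p (ρ.lowered w j))) (ρ.Gp p _), ρ.rel_HGp, map_smul]
  simp only [h.Gp_lowered hc, map_smul, h.H_apply, add_assoc, add_left_comm m p]
  module

theorem Gm_lowered (r i : ℤ) : ρ.Gm r (ρ.lowered w i) = ρ.Gm 0 (ρ.lowered w (r + i)) := by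
  refine h.eq_of_Gp_eq hρ hc (by norm_num) (add_comm r i ▸ Gm_mem_jointWt (h.lowered_mem i))
    (by simpa only [add_zero] using Gm_mem_jointWt (m := 0) (h.lowered_mem (r + i))) fun p => ?_
  simp only [eq_sub_of_add_eq (Gp_Gm_add_Gm_Gp hc _ _ _), h.Gp_lowered hc, map_smul,
    h.Gm_apply hc hρ r, h.L_lowered hc hρ, h.H_lowered hc hρ, add_zero, add_assoc,
    add_left_comm r p]
  push_cast
  module

theorem Gm_apply_of_two_sub_eq_zero (hbc : 2 - 2 * b - c = 0) (q i : ℤ) :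
    ρ.Gm q (w i) = ρ.Gm 0 (w (q + i)) := by
  have hlow := h.eq_zero_of_Gp_eq_zero hρ hc (by norm_num) (h.lowered_mem (q + i))
    fun p => by rw [h.Gp_lowered hc, hbc, zero_smul]
  rw [h.Gm_apply hc hρ, hlow, smul_zero, add_zero]

theorem span_range_union_eq_top (hGm : ∀ q i, ρ.Gm q (w i) = ρ.Gm 0 (w (q + i))) :
    span ℂ (Set.range w ∪ Set.range fun i => ρ.Gm 0 (w i)) = ⊤ := by
  refine hρ.span_eq_top ?_ ?_ ?_ ?_ ?_ ⟨w 0, .inl ⟨0, rfl⟩, h.ne_zero 0⟩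
  · rintro _ (⟨i, rfl⟩ | ⟨i, rfl⟩)
    exacts [⟨_, (h.mem_wt_inf_parity i).2⟩, ⟨_, (h.Gm_zero_mem_wt_inf_parity i).2⟩]
  all_goals
    have hw (i) : w i ∈ span ℂ (Set.range w ∪ Set.range fun i => ρ.Gm 0 (w i)) :=
      subset_span (.inl ⟨i, rfl⟩)
    have hGw (i) : ρ.Gm 0 (w i) ∈ span ℂ (Set.range w ∪ Set.range fun i => ρ.Gm 0 (w i)) :=
      subset_span (.inr ⟨i, rfl⟩)
    rintro m _ (⟨i, rfl⟩ | ⟨i, rfl⟩)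
  · rw [h.L_apply]
    exact smul_mem _ _ (hw _)
  · rw [sub_eq_iff_eq_add.1 (ρ.rel_LGm m 0 (w i)), hGm, h.L_apply, map_smul]
    exact add_mem (smul_mem _ _ (hGw _)) (smul_mem _ _ (hGw _))
  · rw [h.H_apply]
    exact smul_mem _ _ (hw _)
  · rw [sub_eq_iff_eq_add.1 (ρ.rel_HGm m 0 (w i)), hGm, h.H_apply, map_smul]
    exact add_mem (neg_mem (hGw _)) (smul_mem _ _ (hGw _))
  · rw [h.Gp_eq_zero (h.mem i)]
    exact zero_mem _
  · rw [h.Gp_Gm_zero hc]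
    exact smul_mem _ _ (hw _)
  · rw [hGm]
    exact hGw _
  · have hzero : ρ.Gm m (ρ.Gm 0 (w i)) = 0 := by
      obtain ⟨j, rfl⟩ : ∃ j, i = m + j := ⟨i - m, by ring⟩
      rw [← hGm]
      exact Gp_Gp_self ρ.flip m _
    exact hzero ▸ zero_mem _

end

theorem two_sub_ne_zero (hρ : ρ.IsSimpleOfLengthTwo) : 2 - 2 * b - c ≠ 0 := fun hbc =>
  hρ.span_range_union_ne_top h.mem_wt_inf_parity h.Gm_zero_mem_wt_inf_parity <|
    h.span_range_union_eq_top hρ.c₀_eq_zero hρ.isSimple <|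
      h.Gm_apply_of_two_sub_eq_zero hρ.c₀_eq_zero hρ.isSimple hbc

theorem isDensityFamily_lowered (hρ : ρ.IsSimpleOfLengthTwo) :
    ρ.IsDensityFamily a (b + 1 / 2) (c - 1) (τ + 1) (ρ.lowered w) where
  c₀_eq_zero := hρ.c₀_eq_zero
  mem_parity i := (mem_jointWt.1 (h.lowered_mem i)).2.2
  ne_zero i h0 := by
    have hGp := h.Gp_lowered hρ.c₀_eq_zero 0 i
    rw [h0, map_zero] at hGp
    exact smul_ne_zero (h.two_sub_ne_zero hρ) (h.ne_zero _) hGp.symm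
  L_apply := h.L_lowered hρ.c₀_eq_zero hρ.isSimple
  H_apply := h.H_lowered hρ.c₀_eq_zero hρ.isSimple
  Gp_apply r i := by simp only [h.Gp_lowered hρ.c₀_eq_zero, zero_add]
  Gm_apply := h.Gm_lowered hρ.c₀_eq_zero hρ.isSimple

end IsTopFamily

theorem flip_flip (ρ : RamondRep V) : ρ.flip.flip = ρ := by
  simp only [flip, neg_neg]

theorem IsSimpleOfLengthTwo.exists_isDensityFamily (h : ρ.IsSimpleOfLengthTwo) :
    ∃ a b c τ u, ρ.IsDensityFamily a b c τ u := by
  obtain ⟨a, c, τ, htop | htop⟩ := h.exists_isTopRow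
  · obtain ⟨b, w, hw⟩ := htop.exists_isTopFamily h
    exact ⟨_, _, _, _, _, hw.isDensityFamily_lowered h⟩
  · obtain ⟨b, w, hw⟩ := htop.exists_isTopFamily h.flip
    exact ⟨_, _, _, _, _, ρ.flip_flip ▸ (hw.isDensityFamily_lowered h.flip).flip⟩

end RamondRep

/-- any nontrivial simple cuspidal `𝔤`-module of length 2 (all graded
weight multiplicities `≤ 2`, with equality attained somewhere) is isomorphic,
either as a graded `𝔤`-module or after interchanging the two parities, to
`R_{a,b,c}` for some `a, b, c ∈ ℂ` with `2b + c ≠ 2` and `2b - c ≠ 2`. -/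
theorem stmt15 {V : Type} [AddCommGroup V] [Module ℂ V] (ρ : RamondRep V)
    (hsimple : ρ.IsSimple) (hweight : ρ.IsWeight)
    (hbd : ∀ (μ : ℂ) (τ : ZMod 2), Module.rank ℂ ↥(ρ.wt μ ⊓ ρ.parity τ) ≤ 2)
    (heq : ∃ (μ : ℂ) (τ : ZMod 2), Module.rank ℂ ↥(ρ.wt μ ⊓ ρ.parity τ) = 2) :
    ∃ (a b c : ℂ), 2 * b + c ≠ 2 ∧ 2 * b - c ≠ 2 ∧
      ∃ (W : Type) (_ : AddCommGroup W) (_ : Module ℂ W)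
        (σ : RamondRep W) (u upm up um : ℤ → W), σ.IsRabc u upm up um a b c ∧
        ∃ (e : W ≃ₗ[ℂ] V) (ε : Bool),
          (∀ (m : ℤ) (w : W), e (σ.L m w) = ρ.L m (e w)) ∧
          (∀ (m : ℤ) (w : W), e (σ.H m w) = ρ.H m (e w)) ∧
          (∀ (m : ℤ) (w : W), e (σ.Gp m w) = ρ.Gp m (e w)) ∧
          (∀ (m : ℤ) (w : W), e (σ.Gm m w) = ρ.Gm m (e w)) ∧
          (∀ w ∈ σ.even, e w ∈ (if ε then ρ.odd else ρ.even)) ∧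
          (∀ w ∈ σ.odd, e w ∈ (if ε then ρ.even else ρ.odd)) := by
  have hρ : ρ.IsSimpleOfLengthTwo := ⟨hsimple, hbd, heq⟩
  obtain ⟨a, b, c, τ, u, hu⟩ := hρ.exists_isDensityFamily
  refine ⟨a, b, c, hu.two_mul_add_ne hρ, hu.two_mul_sub_ne hρ, V, _, _, ρ.regrade τ, _, _, _, _,
    hu.isRabc_regrade hρ, LinearEquiv.refl ℂ V, decide (τ = 1), fun _ _ => rfl, fun _ _ => rfl,
    fun _ _ => rfl, fun _ _ => rfl, ?_⟩
  fin_cases τ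
  all_goals exact ⟨fun _ hw => hw, fun _ hw => hw⟩
end

section
/- For a, b, c ∈ ℂ, the 𝔤-module R_{a,b,c} is simple if and only if 2b + c ≠ 2 and 2b − c ≠ 2. -/
open Submodule

/-!
Let `2b + c ≠ 2` and `2b - c ≠ 2`. A nonzero submodule meets the span of the `v_i^+`: the operator
`G_1^+ G_0^+` isolates the components of a vector along the `v_i^-`, and once these vanish, `G_0^+`
and then `G_1^+` isolate those along the `v_i` and the `v_i^{+-}`. On that span `L_0` has simple
spectrum, so the submodule contains some `v_i^+`, and then everything.

If `2b - c = 2`, the `v_k^-` span a space `X` of odd vectors, stable under `L` and `H`, killed by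
`G^-` and with `G_r^+ X ⊆ G_0^+ X`. The relations alone make `X + G_0^+ X` a graded submodule, and
it is proper because `G_0^+` maps it into the even vectors but sends `v_0` to `v_0^+`. Exchanging
`G^+` and `G^-` gives the case `2b + c = 2`.
-/

/-- Interpolating at the eigenvalues isolates each term of a sum of eigenvectors. -/
theorem mem_of_linearCombination_mem_of_apply_eq_smul {K V ι : Type*} [Field K] [AddCommGroup V]
    [Module K V] {f : Module.End K V} {v : ι → V} {χ : ι → K} (hv : ∀ i, f (v i) = χ i • v i)
    {S : Submodule K V} (hS : S ≤ S.comap f) {l : ι →₀ K} (hχ : Set.InjOn χ l.support)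
    (hl : Finsupp.linearCombination K v l ∈ S) {i : ι} (hi : i ∈ l.support) : v i ∈ S := by
  classical
  set P := Lagrange.basis l.support χ i
  have hP : Polynomial.aeval f P (Finsupp.linearCombination K v l) = l i • v i := by
    rw [Finsupp.linearCombination_apply, Finsupp.sum, map_sum, Finset.sum_eq_single_of_mem i hi]
    · rw [map_smul, Module.End.aeval_apply_of_mem_apply_eq_smul (hv i),
        Lagrange.eval_basis_self hχ hi, one_smul]
    · intro j hj hji
      rw [map_smul, Module.End.aeval_apply_of_mem_apply_eq_smul (hv j),
        Lagrange.eval_basis_of_ne hji.symm hj, zero_smul, smul_zero]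
  rw [← S.smul_mem_iff (Finsupp.mem_support_iff.1 hi), ← hP]
  exact Polynomial.aeval_apply_smul_mem_of_le_comap hl P f hS

namespace RamondRep

section Induced

variable {V : Type} [AddCommGroup V] [Module ℂ V] {σ : RamondRep V}

theorem Gp_Gp_self_s16 (m : ℤ) (v : V) : σ.Gp m (σ.Gp m v) = 0 := by
  simpa [← two_smul ℂ] using σ.rel_GpGp m m v

variable {X : Submodule ℂ V}

theorem isSubmod_sup_map_Gp_zero (hL : ∀ m, X ≤ X.comap (σ.L m)) (hH : ∀ m, X ≤ X.comap (σ.H m))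
    (hGm : ∀ m, X ≤ LinearMap.ker (σ.Gm m)) (hGp : ∀ m, X.map (σ.Gp m) ≤ X.map (σ.Gp 0)) :
    σ.IsSubmod (X ⊔ X.map (σ.Gp 0)) := by
  have Gp_mem {m : ℤ} {x : V} (hx : x ∈ X) : σ.Gp m x ∈ X.map (σ.Gp 0) :=
    hGp m (mem_map_of_mem hx)
  have stable {T : V →ₗ[ℂ] V} (hX : ∀ x ∈ X, T x ∈ X ⊔ X.map (σ.Gp 0))
      (hGX : ∀ x ∈ X, T (σ.Gp 0 x) ∈ X ⊔ X.map (σ.Gp 0)) :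
      X ⊔ X.map (σ.Gp 0) ≤ (X ⊔ X.map (σ.Gp 0)).comap T :=
    sup_le hX (map_le_iff_le_comap.2 hGX)
  refine ⟨fun m => stable (fun x hx => mem_sup_left (hL m hx)) fun x hx => mem_sup_right ?_,
    fun m => stable (fun x hx => mem_sup_left (hH m hx)) fun x hx => mem_sup_right ?_,
    fun m => stable (fun x hx => mem_sup_right (Gp_mem hx)) fun x hx => ?_,
    fun m => stable (fun x hx => by simp [LinearMap.mem_ker.1 (hGm m hx)])
      fun x hx => mem_sup_left ?_⟩
  · rw [sub_eq_iff_eq_add.1 (σ.rel_LGp m 0 x)]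
    exact add_mem (smul_mem _ _ (Gp_mem hx)) (mem_map_of_mem (hL m hx))
  · rw [sub_eq_iff_eq_add.1 (σ.rel_HGp m 0 x)]
    exact add_mem (Gp_mem hx) (mem_map_of_mem (hH m hx))
  · obtain ⟨y, -, hy⟩ := Gp_mem (m := m) hx
    rw [eq_neg_of_add_eq_zero_left (σ.rel_GpGp m 0 x), ← hy, Gp_Gp_self_s16, neg_zero]
    exact zero_mem _
  · have anticomm := σ.rel_GpGm 0 m x
    rw [LinearMap.mem_ker.1 (hGm m hx), map_zero, zero_add] at anticomm
    rw [anticomm]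
    exact add_mem (add_mem (smul_mem _ _ (hL _ hx)) (smul_mem _ _ (hH _ hx))) (smul_mem _ _ hx)

theorem sup_map_Gp_zero_eq_inf_even_sup_inf_odd (hX : X ≤ σ.odd) :
    X ⊔ X.map (σ.Gp 0) =
      (X ⊔ X.map (σ.Gp 0)) ⊓ σ.even ⊔ (X ⊔ X.map (σ.Gp 0)) ⊓ σ.odd := by
  have map_le_even : X.map (σ.Gp 0) ≤ σ.even :=
    map_le_iff_le_comap.2 fun x hx => σ.Gp_odd 0 x (hX hx)
  exact le_antisymm
    (sup_le (le_sup_of_le_right (le_inf le_sup_left hX))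
      (le_sup_of_le_left (le_inf le_sup_right map_le_even)))
    (sup_le inf_le_left inf_le_left)

theorem Gp_zero_mem_even_of_mem_sup_map (hX : X ≤ σ.odd) {v : V} (hv : v ∈ X ⊔ X.map (σ.Gp 0)) :
    σ.Gp 0 v ∈ σ.even := by
  obtain ⟨x, hx, -, ⟨y, -, rfl⟩, rfl⟩ := mem_sup.1 hv
  rw [map_add, Gp_Gp_self_s16, add_zero]
  exact σ.Gp_odd 0 x (hX hx)

theorem not_isSimple_of_le_odd (hX : X ≤ σ.odd) (hne : X ≠ ⊥)
    (hL : ∀ m, X ≤ X.comap (σ.L m)) (hH : ∀ m, X ≤ X.comap (σ.H m))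
    (hGm : ∀ m, X ≤ LinearMap.ker (σ.Gm m)) (hGp : ∀ m, X.map (σ.Gp m) ≤ X.map (σ.Gp 0))
    {v : V} (hv : v ∈ σ.even) (hGv : σ.Gp 0 v ≠ 0) : ¬ σ.IsSimple := by
  rintro ⟨-, hsimple⟩
  rcases hsimple _ ⟨isSubmod_sup_map_Gp_zero hL hH hGm hGp,
    sup_map_Gp_zero_eq_inf_even_sup_inf_odd hX⟩ with hbot | htop
  · exact hne (sup_eq_bot_iff.1 hbot).1
  · exact hGv (disjoint_def.1 σ.grading.disjoint _
      (Gp_zero_mem_even_of_mem_sup_map hX (htop ▸ mem_top)) (σ.Gp_even 0 v hv))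

theorem not_isSimple_of_odd_family {x : ℤ → V} (hodd : ∀ k, x k ∈ σ.odd) (hx0 : x 0 ≠ 0)
    (hL : ∀ m k, ∃ t : ℂ, σ.L m (x k) = t • x (m + k))
    (hH : ∀ m k, ∃ t : ℂ, σ.H m (x k) = t • x (m + k))
    (hGm : ∀ m k, σ.Gm m (x k) = 0) (hGp : ∀ m k, σ.Gp m (x k) = σ.Gp 0 (x (m + k)))
    {v : V} (hv : v ∈ σ.even) (hGv : σ.Gp 0 v ≠ 0) : ¬ σ.IsSimple := by
  have x_mem (k : ℤ) : x k ∈ span ℂ (Set.range x) := subset_span ⟨k, rfl⟩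
  have span_le_of {Y : Submodule ℂ V} (hY : ∀ k, x k ∈ Y) : span ℂ (Set.range x) ≤ Y :=
    span_le.2 (Set.range_subset_iff.2 hY)
  refine not_isSimple_of_le_odd (span_le_of hodd) ((Submodule.ne_bot_iff _).2 ⟨x 0, x_mem 0, hx0⟩)
    (fun m => span_le_of fun k => ?_) (fun m => span_le_of fun k => ?_)
    (fun m => span_le_of (hGm m)) (fun m => map_le_iff_le_comap.2 (span_le_of fun k => ?_)) hv hGv
  · obtain ⟨t, ht⟩ := hL m k
    exact mem_comap.2 (ht ▸ smul_mem _ _ (x_mem _))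
  · obtain ⟨t, ht⟩ := hH m k
    exact mem_comap.2 (ht ▸ smul_mem _ _ (x_mem _))
  · exact mem_comap.2 (hGp m k ▸ mem_map_of_mem (x_mem _))

end Induced

section Swap

variable {V : Type} [AddCommGroup V] [Module ℂ V] (σ : RamondRep V)

/-- The twist of a `𝔤`-module by the involution `L_m ↦ L_m`, `H_m ↦ -H_m`, `G_m^± ↦ G_m^∓` of `𝔤`;
it turns statements about `G^+` into statements about `G^-`. -/
def swap : RamondRep V where
  __ := σ
  H m := -σ.H m
  Gp := σ.Gm
  Gm := σ.Gp
  H_even m v hv := neg_mem (σ.H_even m v hv)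
  H_odd m v hv := neg_mem (σ.H_odd m v hv)
  Gp_even := σ.Gm_even
  Gp_odd := σ.Gm_odd
  Gm_even := σ.Gp_even
  Gm_odd := σ.Gp_odd
  rel_HH m n v := by simpa using σ.rel_HH m n v
  rel_LH m n v := by
    simp only [LinearMap.neg_apply, map_neg, smul_neg, ← σ.rel_LH]
    abel
  rel_LGp := σ.rel_LGm
  rel_LGm := σ.rel_LGp
  rel_HGp m p v := by
    rw [← neg_neg (σ.Gm (m + p) v), ← σ.rel_HGm]
    simp only [LinearMap.neg_apply, map_neg]
    abel
  rel_HGm m p v := by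
    rw [← σ.rel_HGp]
    simp only [LinearMap.neg_apply, map_neg]
    abel
  rel_GpGm p q v := by
    rw [add_comm, σ.rel_GpGm q p, add_comm q p]
    by_cases hpq : p + q = 0
    · obtain rfl : q = -p := by omega
      simp only [LinearMap.neg_apply]
      push_cast
      module
    · simp only [hpq, if_false, LinearMap.neg_apply]
      module
  rel_GpGp := σ.rel_GmGm
  rel_GmGm := σ.rel_GpGp

variable {σ}

theorem IsSimple.swap (hσ : σ.IsSimple) : σ.swap.IsSimple := by
  refine ⟨fun htriv => hσ.1 fun m v => ?_, fun S hS => hσ.2 S ?_⟩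
  · obtain ⟨hL, hH, hGp, hGm⟩ := htriv m v
    exact ⟨hL, neg_eq_zero.1 hH, hGm, hGp⟩
  · obtain ⟨⟨hL, hH, hGp, hGm⟩, hgraded⟩ := hS
    exact ⟨⟨hL, fun m v hv => neg_mem_iff.1 (hH m v hv), hGm, hGp⟩, hgraded⟩

end Swap

namespace IsRabc

variable {W : Type} [AddCommGroup W] [Module ℂ W] {σ : RamondRep W} {u upm up um : ℤ → W}
  {a b c : ℂ} (h : σ.IsRabc u upm up um a b c)
include h

theorem up_ne_zero (i : ℤ) : up i ≠ 0 := by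
  simpa using h.2.1.ne_zero ((true, false), i)

theorem um_ne_zero (i : ℤ) : um i ≠ 0 := by
  simpa using h.2.1.ne_zero ((true, true), i)

theorem span_eq_top :
    span ℂ (Set.range u ∪ Set.range upm ∪ Set.range up ∪ Set.range um) = ⊤ :=
  h.2.2.1

theorem u_mem_even (i : ℤ) : u i ∈ σ.even :=
  h.2.2.2.1 ▸ subset_span (Or.inl ⟨i, rfl⟩)

theorem up_mem_odd (k : ℤ) : up k ∈ σ.odd :=
  h.2.2.2.2.1 ▸ subset_span (Or.inl ⟨k, rfl⟩)

theorem um_mem_odd (k : ℤ) : um k ∈ σ.odd :=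
  h.2.2.2.2.1 ▸ subset_span (Or.inr ⟨k, rfl⟩)

theorem L_up (m k : ℤ) : σ.L m (up k) = (a + k + (b - 1 / 2) * m) • up (m + k) :=
  h.2.2.2.2.2.2.1 m k

theorem L_um (m k : ℤ) : σ.L m (um k) = (a + k + (b - 1 / 2) * m) • um (m + k) :=
  h.2.2.2.2.2.2.2.1 m k

theorem H_up (m k : ℤ) : σ.H m (up k) = (c + 1) • up (m + k) :=
  h.2.2.2.2.2.2.2.2.2.2.1 m k

theorem H_um (m k : ℤ) : σ.H m (um k) = (c - 1) • um (m + k) :=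
  h.2.2.2.2.2.2.2.2.2.2.2.1 m k

theorem Gp_u (r i : ℤ) : σ.Gp r (u i) = up (r + i) :=
  h.2.2.2.2.2.2.2.2.2.2.2.2.2.1 r i

theorem Gm_u (r i : ℤ) : σ.Gm r (u i) = um (r + i) :=
  h.2.2.2.2.2.2.2.2.2.2.2.2.2.2.1 r i

theorem Gp_up (r i : ℤ) : σ.Gp r (up i) = 0 :=
  h.2.2.2.2.2.2.2.2.2.2.2.2.2.2.2.1 r i

theorem Gm_um (r i : ℤ) : σ.Gm r (um i) = 0 :=
  h.2.2.2.2.2.2.2.2.2.2.2.2.2.2.2.2.1 r i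

theorem Gp_um (r k : ℤ) : σ.Gp r (um k) = upm (k + r) + ((c + 2 - 2 * b) * r) • u (k + r) :=
  h.2.2.2.2.2.2.2.2.2.2.2.2.2.2.2.2.2.1 r k

theorem Gm_up (r k : ℤ) :
    σ.Gm r (up k) = -upm (r + k) - (2 * a + 2 * k + (2 * b + c) * r) • u (k + r) :=
  h.2.2.2.2.2.2.2.2.2.2.2.2.2.2.2.2.2.2.1 r k

theorem Gp_upm (r i : ℤ) : σ.Gp r (upm i) = ((2 * b - c - 2) * r) • up (r + i) :=
  h.2.2.2.2.2.2.2.2.2.2.2.2.2.2.2.2.2.2.2.2 r i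

theorem Gp_zero_um (k : ℤ) : σ.Gp 0 (um k) = upm k := by
  simp [h.Gp_um]

theorem not_isSimple_of_two_mul_sub_eq (hα : 2 * b - c = 2) : ¬ σ.IsSimple := by
  have Gp_um_eq (m k : ℤ) : σ.Gp m (um k) = σ.Gp 0 (um (m + k)) := by
    rw [h.Gp_zero_um, h.Gp_um, show c + 2 - 2 * b = 0 by linear_combination -hα, zero_mul,
      zero_smul, add_zero, add_comm]
  exact not_isSimple_of_odd_family h.um_mem_odd (h.um_ne_zero 0) (fun m k => ⟨_, h.L_um m k⟩)
    (fun m k => ⟨_, h.H_um m k⟩) h.Gm_um Gp_um_eq (h.u_mem_even 0) (h.Gp_u 0 0 ▸ h.up_ne_zero _)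

theorem not_isSimple_of_two_mul_add_eq (hβ : 2 * b + c = 2) : ¬ σ.IsSimple := by
  have Gm_up_eq (m k : ℤ) : σ.Gm m (up k) = σ.Gm 0 (up (m + k)) := by
    rw [h.Gm_up, h.Gm_up, hβ, zero_add, add_zero, add_comm k m]
    push_cast
    module
  have H_up_swap (m k : ℤ) : σ.swap.H m (up k) = -(c + 1) • up (m + k) := by
    rw [neg_smul, ← h.H_up]
    rfl
  exact fun hσ => not_isSimple_of_odd_family (σ := σ.swap) h.up_mem_odd (h.up_ne_zero 0)
    (fun m k => ⟨_, h.L_up m k⟩) (fun m k => ⟨_, H_up_swap m k⟩) h.Gp_up Gm_up_eq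
    (h.u_mem_even 0) (h.Gm_u 0 0 ▸ h.um_ne_zero _) hσ.swap

theorem exists_eq_linearCombination (w : W) : ∃ p q r s : ℤ →₀ ℂ,
    w = Finsupp.linearCombination ℂ u p + Finsupp.linearCombination ℂ upm q +
      Finsupp.linearCombination ℂ up r + Finsupp.linearCombination ℂ um s := by
  have hw : w ∈ span ℂ (Set.range u ∪ Set.range upm ∪ Set.range up ∪ Set.range um) :=
    h.span_eq_top ▸ mem_top
  simp only [span_union, mem_sup, Finsupp.mem_span_range_iff_exists_finsupp] at hw
  obtain ⟨_, ⟨_, ⟨_, ⟨p, rfl⟩, _, ⟨q, rfl⟩, rfl⟩, _, ⟨r, rfl⟩, rfl⟩, _, ⟨s, rfl⟩, rfl⟩ := hw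
  exact ⟨p, q, r, s, rfl⟩

variable {S : Submodule ℂ W}

theorem exists_up_mem_of_linearCombination_mem (hS : ∀ v ∈ S, σ.L 0 v ∈ S) {m : ℤ} {l : ℤ →₀ ℂ}
    (hl : l ≠ 0) (hmem : Finsupp.linearCombination ℂ (fun i => up (m + i)) l ∈ S) :
    ∃ i, up i ∈ S := by
  obtain ⟨i, hi⟩ := Finsupp.support_nonempty_iff.2 hl
  have L_zero_up (j : ℤ) : σ.L 0 (up (m + j)) = (a + (m + j : ℤ)) • up (m + j) := by
    simp [h.L_up]
  have hinj : Function.Injective fun j : ℤ => a + ((m + j : ℤ) : ℂ) := fun j j' hj => by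
    simpa using hj
  exact ⟨m + i, mem_of_linearCombination_mem_of_apply_eq_smul L_zero_up hS hinj.injOn hmem hi⟩

theorem Gp_linearCombination_u (m : ℤ) (l : ℤ →₀ ℂ) :
    σ.Gp m (Finsupp.linearCombination ℂ u l) =
      Finsupp.linearCombination ℂ (fun i => up (m + i)) l := by
  rw [Finsupp.apply_linearCombination, show σ.Gp m ∘ u = _ from funext (h.Gp_u m)]

theorem Gp_linearCombination_upm (m : ℤ) (l : ℤ →₀ ℂ) :
    σ.Gp m (Finsupp.linearCombination ℂ upm l) =
      ((2 * b - c - 2) * m) • Finsupp.linearCombination ℂ (fun i => up (m + i)) l := by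
  simp only [Finsupp.linearCombination_apply, map_finsuppSum, map_smul, h.Gp_upm,
    Finsupp.smul_sum, smul_comm ((2 * b - c - 2) * (m : ℂ))]

theorem Gp_linearCombination_up (m : ℤ) (l : ℤ →₀ ℂ) :
    σ.Gp m (Finsupp.linearCombination ℂ up l) = 0 := by
  rw [Finsupp.apply_linearCombination, show σ.Gp m ∘ up = 0 from funext (h.Gp_up m),
    Finsupp.linearCombination_zero_apply]

theorem Gp_zero_linearCombination_um (l : ℤ →₀ ℂ) :
    σ.Gp 0 (Finsupp.linearCombination ℂ um l) = Finsupp.linearCombination ℂ upm l := by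
  rw [Finsupp.apply_linearCombination, show σ.Gp 0 ∘ um = upm from funext h.Gp_zero_um]

theorem exists_up_mem (hα : 2 * b - c ≠ 2) (hS : σ.IsSubmod S) (hne : S ≠ ⊥) :
    ∃ i, up i ∈ S := by
  have hα' : 2 * b - c - 2 ≠ 0 := sub_ne_zero.2 hα
  obtain ⟨hL, -, hGp, -⟩ := hS
  obtain ⟨w, hwS, hw⟩ := S.exists_mem_ne_zero_of_ne_bot hne
  obtain ⟨p, q, r, s, rfl⟩ := h.exists_eq_linearCombination w
  have Gp_zero_mem := hGp 0 _ hwS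
  have Gp_one_mem := hGp 1 _ hwS
  have Gp_one_Gp_zero_mem := hGp 1 _ Gp_zero_mem
  simp only [map_add, h.Gp_linearCombination_u, h.Gp_linearCombination_upm,
    h.Gp_linearCombination_up, h.Gp_zero_linearCombination_um, Int.cast_zero, Int.cast_one,
    mul_zero, mul_one, zero_smul, zero_add, add_zero] at Gp_zero_mem Gp_one_mem Gp_one_Gp_zero_mem
  rcases ne_or_eq s 0 with hs | rfl
  · exact h.exists_up_mem_of_linearCombination_mem (hL 0) hs
      ((S.smul_mem_iff hα').1 Gp_one_Gp_zero_mem)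
  rcases ne_or_eq p 0 with hp | rfl
  · exact h.exists_up_mem_of_linearCombination_mem (m := 0) (hL 0) hp (by simpa using Gp_zero_mem)
  rcases ne_or_eq q 0 with hq | rfl
  · exact h.exists_up_mem_of_linearCombination_mem (hL 0) hq
      ((S.smul_mem_iff hα').1 (by simpa using Gp_one_mem))
  have hr : r ≠ 0 := by
    rintro rfl
    simp at hw
  exact h.exists_up_mem_of_linearCombination_mem (m := 0) (hL 0) hr (by simpa using hwS)

theorem up_mem_of_up_mem (hβ : 2 * b + c ≠ 2) (hα : 2 * b - c ≠ 2) (hS : σ.IsSubmod S) {j : ℤ}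
    (hj : up j ∈ S) (n : ℤ) : up n ∈ S := by
  by_cases hc : c + 1 = 0
  -- Here `H` kills the `v_i^+`. Should `L_{n-j}` kill `v_j^+` as well, any third index `t` gives a
  -- detour: `L` fails from `j` to at most one target and from at most one source to `n`.
  · have move {i k : ℤ} (hi : up i ∈ S) (hne : a + i + (b - 1 / 2) * (k - i) ≠ 0) : up k ∈ S := by
      have hLi := hS.1 (k - i) _ hi
      rw [h.L_up, sub_add_cancel] at hLi
      exact (S.smul_mem_iff (by exact_mod_cast hne)).1 hLi
    by_cases hjn : a + j + (b - 1 / 2) * ((n : ℂ) - j) = 0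
    · obtain ⟨t, ht⟩ := Infinite.exists_notMem_finset ({j, n} : Finset ℤ)
      obtain ⟨t_ne_j, t_ne_n⟩ : (t : ℂ) - j ≠ 0 ∧ (t : ℂ) - n ≠ 0 := by
        simpa [sub_eq_zero] using ht
      have hjt : a + j + (b - 1 / 2) * ((t : ℂ) - j) ≠ 0 := fun hjt => hα <|
        mul_right_cancel₀ t_ne_n (by linear_combination 2 * hjt - 2 * hjn - (t - n) * hc)
      have htn : a + t + (b - 1 / 2) * ((n : ℂ) - t) ≠ 0 := fun htn => hβ <|
        mul_right_cancel₀ t_ne_j (by linear_combination 2 * hjn - 2 * htn + (t - j) * hc)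
      exact move (move hj hjt) htn
    · exact move hj hjn
  · have hHj := hS.2.1 (n - j) _ hj
    rw [h.H_up, sub_add_cancel] at hHj
    exact (S.smul_mem_iff hc).1 hHj

theorem u_mem_of_up_mem (hβ : 2 * b + c ≠ 2) (hS : σ.IsSubmod S) (hup : ∀ n, up n ∈ S) (n : ℤ) :
    u n ∈ S := by
  have hdiff : σ.Gm 0 (up n) - σ.Gm 1 (up (n - 1)) = (2 * b + c - 2) • u n := by
    rw [h.Gm_up, h.Gm_up, zero_add, add_zero, add_sub_cancel, sub_add_cancel]
    push_cast
    module
  rw [← S.smul_mem_iff (sub_ne_zero.2 hβ), ← hdiff]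
  exact sub_mem (hS.2.2.2 0 _ (hup n)) (hS.2.2.2 1 _ (hup (n - 1)))

theorem eq_top_of_u_mem (hS : σ.IsSubmod S) (hu : ∀ n, u n ∈ S) : S = ⊤ := by
  obtain ⟨-, -, hGp, hGm⟩ := hS
  have hup (n : ℤ) : up n ∈ S := by simpa [h.Gp_u] using hGp 0 _ (hu n)
  have hum (n : ℤ) : um n ∈ S := by simpa [h.Gm_u] using hGm 0 _ (hu n)
  have hupm (n : ℤ) : upm n ∈ S := h.Gp_zero_um n ▸ hGp 0 _ (hum n)
  rw [eq_top_iff, ← h.span_eq_top, span_le]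
  simp only [Set.union_subset_iff, Set.range_subset_iff]
  exact ⟨⟨⟨hu, hupm⟩, hup⟩, hum⟩

theorem eq_bot_or_eq_top_of_isSubmod (hβ : 2 * b + c ≠ 2) (hα : 2 * b - c ≠ 2)
    (hS : σ.IsSubmod S) : S = ⊥ ∨ S = ⊤ := by
  refine or_iff_not_imp_left.2 fun hne => ?_
  obtain ⟨j, hj⟩ := h.exists_up_mem hα hS hne
  exact h.eq_top_of_u_mem hS (h.u_mem_of_up_mem hβ hS (h.up_mem_of_up_mem hβ hα hS hj))

theorem not_isTrivialRep : ¬ σ.IsTrivialRep := fun htriv =>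
  h.up_ne_zero (0 + 0) (h.Gp_u 0 0 ▸ (htriv 0 (u 0)).2.2.1)

end IsRabc

end RamondRep

/-- the `𝔤`-module `R_{a,b,c}` is simple if and only if
`2b + c ≠ 2` and `2b - c ≠ 2`. -/
theorem stmt16 (a b c : ℂ) {W : Type} [AddCommGroup W] [Module ℂ W]
    (σ : RamondRep W) (u upm up um : ℤ → W)
    (hRabc : σ.IsRabc u upm up um a b c) :
    σ.IsSimple ↔ (2 * b + c ≠ 2 ∧ 2 * b - c ≠ 2) := by
  refine ⟨fun hσ => ⟨fun hβ => ?_, fun hα => ?_⟩, fun ⟨hβ, hα⟩ => ?_⟩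
  · exact hRabc.not_isSimple_of_two_mul_add_eq hβ hσ
  · exact hRabc.not_isSimple_of_two_mul_sub_eq hα hσ
  · exact ⟨hRabc.not_isTrivialRep, fun S hS => hRabc.eq_bot_or_eq_top_of_isSubmod hβ hα hS.1⟩
end

section
/- Let a, b, c ∈ ℂ and let f, g, h : ℤ × ℤ → ℂ be functions satisfying, for all m, r, k ∈ ℤ: g(0, k) = 0; g(r, k) + h(r, k) = −2(a + (2b−1)r + k); −f(m, r+k) + c·h(r, k) − (c+1)h(r, m+k) = −h(m+r, k); and f(m, r+k) + c·g(r, k) − (c−1)g(r, m+k) = g(m+r, k). Then g(m, k) = (c + 2 − 2b)m and h(m, k) = −(2a + 2k + (2b+c)m) for all m, k ∈ ℤ. -/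
/-!
At `r = 0` the fourth equation collapses to `f = g`, and the second gives `h(0, k) = −2(a + k)`.
Substituting both into the third equation at `r = 0` determines `h − g`, while the second
determines `g + h`; since `2` can be cancelled, `g` and `h` are determined.
-/

namespace CrossTerms

variable {M R : Type*} [AddZeroClass M] [CommRing R] {a b c : R} {ι : M →+ R} {f g h : M → M → R}

theorem h_zero_left (g_zero : ∀ k, g 0 k = 0)
    (g_add_h : ∀ r k, g r k + h r k = -2 * (a + (2 * b - 1) * ι r + ι k)) (k : M) :
    h 0 k = -2 * (a + ι k) := by
  simpa only [g_zero, zero_add, map_zero, mul_zero, add_zero] using g_add_h 0 k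

theorem f_eq_g (g_zero : ∀ k, g 0 k = 0)
    (f_add_g : ∀ m k, f m k + c * g 0 k - (c - 1) * g 0 (m + k) = g m k) (m k : M) :
    f m k = g m k := by
  simpa only [g_zero, mul_zero, add_zero, sub_zero] using f_add_g m k

theorem h_sub_g (h_zero : ∀ k, h 0 k = -2 * (a + ι k)) (f_eq : ∀ m k, f m k = g m k)
    (neg_f_add_h : ∀ m k, -f m k + c * h 0 k - (c + 1) * h 0 (m + k) = -h m k) (m k : M) :
    h m k - g m k = -2 * (a + (c + 1) * ι m + ι k) := by
  have at_zero := neg_f_add_h m k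
  rw [f_eq, h_zero, h_zero, map_add] at at_zero
  linear_combination at_zero

theorem g_eq_of_add_of_sub (two_regular : IsRegular (2 : R))
    (g_add_h : ∀ r k, g r k + h r k = -2 * (a + (2 * b - 1) * ι r + ι k))
    (h_sub : ∀ m k, h m k - g m k = -2 * (a + (c + 1) * ι m + ι k)) (m k : M) :
    g m k = (c + 2 - 2 * b) * ι m := by
  apply two_regular.left
  linear_combination g_add_h m k - h_sub m k

end CrossTerms

theorem stmt19_general {M R : Type*} [AddZeroClass M] [CommRing R]
    (two_regular : IsRegular (2 : R)) (ι : M →+ R) (a b c : R) (f g h : M → M → R)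
    (g_zero : ∀ k, g 0 k = 0)
    (g_add_h : ∀ r k, g r k + h r k = -2 * (a + (2 * b - 1) * ι r + ι k))
    (neg_f_add_h : ∀ m k, -f m k + c * h 0 k - (c + 1) * h 0 (m + k) = -h m k)
    (f_add_g : ∀ m k, f m k + c * g 0 k - (c - 1) * g 0 (m + k) = g m k) :
    (∀ m k, g m k = (c + 2 - 2 * b) * ι m) ∧
      (∀ m k, h m k = -(2 * a + 2 * ι k + (2 * b + c) * ι m)) := by
  have h_sub := CrossTerms.h_sub_g (CrossTerms.h_zero_left g_zero g_add_h)
    (CrossTerms.f_eq_g g_zero f_add_g) neg_f_add_h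
  have g_eq := CrossTerms.g_eq_of_add_of_sub two_regular g_add_h h_sub
  refine ⟨g_eq, fun m k => ?_⟩
  linear_combination g_add_h m k - g_eq m k

/-- the functional equations for the cross terms
`G_r^+ v_k^- = v_{r+k}^{+-} + g(r,k) v_{r+k}` and
`G_r^- v_k^+ = −v_{r+k}^{+-} + h(r,k) v_{r+k}` in a cuspidal module of length 2
over the `N = 2` Ramond algebra.  If `g(0,k) = 0`,
`g(r,k) + h(r,k) = −2(a + (2b−1)r + k)`,
`−f(m, r+k) + c h(r,k) − (c+1) h(r, m+k) = −h(m+r, k)`, and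
`f(m, r+k) + c g(r,k) − (c−1) g(r, m+k) = g(m+r, k)` for all `m, r, k ∈ ℤ`,
then `g(m,k) = (c + 2 − 2b) m` and `h(m,k) = −(2a + 2k + (2b+c) m)`. -/
theorem stmt19 (a b c : ℂ) (f g h : ℤ → ℤ → ℂ)
    (h0 : ∀ k : ℤ, g 0 k = 0)
    (h1 : ∀ r k : ℤ,
      g r k + h r k = -2 * (a + (2 * b - 1) * (r : ℂ) + (k : ℂ)))
    (h2 : ∀ m r k : ℤ,
      -f m (r + k) + c * h r k - (c + 1) * h r (m + k) = -h (m + r) k)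
    (h3 : ∀ m r k : ℤ,
      f m (r + k) + c * g r k - (c - 1) * g r (m + k) = g (m + r) k) :
    (∀ m k : ℤ, g m k = (c + 2 - 2 * b) * (m : ℂ)) ∧
      (∀ m k : ℤ, h m k = -(2 * a + 2 * (k : ℂ) + (2 * b + c) * (m : ℂ))) := by
  exact stmt19_general (IsRegular.of_ne_zero two_ne_zero) (Int.castAddHom ℂ) a b c f g h h0 h1
    (fun m k => by simpa using h2 m 0 k) (fun m k => by simpa using h3 m 0 k)
end
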